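/- arXiv:2401.17720 — 7 statements merged into one kernel-verified Lean document; each statement's English description precedes it below -/
import Mathlib

section
/- Define a(0) = 0 and a(n) = (2n−1)(17n² − 17n + 5) for n ≥ 1, and b(0) = 6 and b(n) = −n⁶ for n ≥ 1. Then the convergents p(n)/q(n) of the continued fraction with partial quotients (a(n), b(n)) converge to ζ(3) as n → ∞. (This is Apéry's famous continued fraction for ζ(3).) -/
open Filter Topology

/-- The product of binomials `C(n,k) C(n+k,k)`. -/
noncomputable def apW (n k : ℕ) : ℝ := (n.choose k : ℝ) * ((n + k).choose k : ℝ)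

noncomputable def apC (n k : ℕ) : ℝ :=
  ∑ m ∈ Finset.range n, 1 / ((m : ℝ) + 1) ^ 3 +
  ∑ m ∈ Finset.range k, (-1 : ℝ) ^ m / (2 * ((m : ℝ) + 1) ^ 3 * apW n (m + 1))

lemma apW_zero (n : ℕ) : apW n 0 = 1 := by simp [apW]

lemma apW_pos {n k : ℕ} (h : k ≤ n) : 0 < apW n k := by
  unfold apW
  have := Nat.choose_pos h
  have := Nat.choose_pos (show k ≤ n + k by omega)
  positivity

lemma apW_big {n k : ℕ} (h : n < k) : apW n k = 0 := by
  simp [apW, Nat.choose_eq_zero_of_lt h]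

lemma apW_fac {n k : ℕ} (h : k ≤ n) :
    apW n k * ((k.factorial : ℝ) ^ 2 * ((n - k).factorial : ℝ)) = ((n + k).factorial : ℝ) := by
  have h1 := Nat.choose_mul_factorial_mul_factorial h
  have h2 := Nat.choose_mul_factorial_mul_factorial (show k ≤ n + k by omega)
  rw [Nat.add_sub_cancel] at h2
  rw [← h2, Nat.cast_mul, ← h1]
  unfold apW
  push_cast
  ring

lemma apW_succ_right {n k : ℕ} (h : k < n) :
    apW n (k + 1) = apW n k * ((n : ℝ) - k) * (n + k + 1) / ((k : ℝ) + 1) ^ 2 := by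
  obtain ⟨d, rfl⟩ := Nat.exists_eq_add_of_lt h
  have h1 := apW_fac (show k ≤ k + d + 1 by omega)
  have h2 := apW_fac (show k + 1 ≤ k + d + 1 by omega)
  rw [show k + d + 1 - k = d + 1 by omega] at h1
  rw [show k + d + 1 - (k + 1) = d by omega,
    show k + d + 1 + (k + 1) = (k + d + 1 + k) + 1 by omega,
    Nat.factorial_succ (k + d + 1 + k), Nat.cast_mul, ← h1,
    Nat.factorial_succ d, Nat.factorial_succ k] at h2
  have hk := Nat.factorial_pos k
  have hd := Nat.factorial_pos d
  have hk' : (k.factorial : ℝ) ≠ 0 := by positivity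
  have hd' : (d.factorial : ℝ) ≠ 0 := by positivity
  rw [eq_div_iff (by positivity)]
  apply mul_right_cancel₀ (mul_ne_zero (pow_ne_zero 2 hk') hd')
  push_cast at h2 ⊢
  linear_combination h2

lemma apW_succ_left {n k : ℕ} (h : k ≤ n) :
    apW (n + 1) k = apW n k * ((n : ℝ) + 1 + k) / ((n : ℝ) + 1 - k) := by
  obtain ⟨d, rfl⟩ := Nat.exists_eq_add_of_le h
  have h1 := apW_fac (show k ≤ k + d by omega)
  have h2 := apW_fac (show k ≤ k + d + 1 by omega)
  rw [show k + d - k = d by omega] at h1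
  rw [show k + d + 1 - k = d + 1 by omega,
    show k + d + 1 + k = (k + d + k) + 1 by omega,
    Nat.factorial_succ (k + d + k), Nat.cast_mul, ← h1,
    Nat.factorial_succ d] at h2
  have hk := Nat.factorial_pos k
  have hd := Nat.factorial_pos d
  have hk' : (k.factorial : ℝ) ≠ 0 := by positivity
  have hd' : (d.factorial : ℝ) ≠ 0 := by positivity
  have e : ((k + d : ℕ) : ℝ) + 1 - k = d + 1 := by push_cast; ring
  rw [e, eq_div_iff (by positivity)]
  apply mul_right_cancel₀ (mul_ne_zero (pow_ne_zero 2 hk') hd')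
  push_cast at h2 ⊢
  linear_combination h2

/-- lowering, valid for all `k ≤ n+1` -/
lemma apW_pred {n k : ℕ} (h : k ≤ n + 1) :
    apW n k = apW (n + 1) k * ((n : ℝ) + 1 - k) / ((n : ℝ) + 1 + k) := by
  rcases Nat.lt_or_ge n k with h1 | h1
  · have : k = n + 1 := by omega
    subst this
    rw [apW_big h1]; push_cast; simp
  · rw [apW_succ_left h1]
    have : (k : ℝ) ≤ n := by exact_mod_cast h1
    have h3 : (n : ℝ) + 1 - k ≠ 0 := by linarith
    have h4 : (n : ℝ) + 1 + k ≠ 0 := by positivity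
    field_simp

lemma apC_succ (n k : ℕ) : apC n (k + 1) = apC n k +
    (-1 : ℝ) ^ k / (2 * ((k : ℝ) + 1) ^ 3 * apW n (k + 1)) := by
  unfold apC; rw [Finset.sum_range_succ _ k]; ring

lemma apC_diff {n k : ℕ} (h : k ≤ n) : apC (n + 1) k = apC n k +
    (-1 : ℝ) ^ k / (((n : ℝ) + 1) ^ 2 * ((n : ℝ) + 1 + k) * apW n k) := by
  induction k with
  | zero =>
    simp only [apC, Finset.sum_range_succ _ n, apW_zero]
    simp
    field_simp
  | succ k ih =>
    rw [apC_succ, apC_succ, ih (by omega), apW_succ_left h, apW_succ_right (show k < n by omega)]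
    have hw := (apW_pos (show k ≤ n by omega)).ne'
    have hk : (k : ℝ) + 1 ≤ n := by exact_mod_cast h
    have h3 : (n : ℝ) - k ≠ 0 := by linarith
    push_cast
    have h4 : (n : ℝ) + 1 - (k + 1) ≠ 0 := by linarith
    have h5 : (n : ℝ) + 1 + (k + 1) ≠ 0 := by positivity
    have h6 : (n : ℝ) + 1 + k ≠ 0 := by positivity
    have h7 : (n : ℝ) + k + 1 ≠ 0 := by positivity
    rw [pow_succ (-1 : ℝ)]
    generalize apW n k = v at *
    generalize (-1 : ℝ) ^ k = e at *
    field_simp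
    ring

noncomputable def apP (x : ℝ) : ℝ := (2 * x + 1) * (17 * x ^ 2 + 17 * x + 5)

noncomputable def apB (N k : ℕ) : ℝ :=
  4 * (2 * (N : ℝ) + 1) * (k * (2 * k + 1) - (2 * N + 1) ^ 2) * apW N k ^ 2

lemma apA_part (n k : ℕ) (h : k ≤ n + 1) :
    ∑ j ∈ Finset.range (k + 1), (((n : ℝ) + 2) ^ 3 * apW (n + 2) j ^ 2
      - apP (n + 1) * apW (n + 1) j ^ 2 + ((n : ℝ) + 1) ^ 3 * apW n j ^ 2) = apB (n + 1) k := by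
  induction k with
  | zero => simp [apW_zero, apB, apP]; ring
  | succ k ih =>
    rw [Finset.sum_range_succ, ih (by omega), apB, apB, apP, apW_pred h, apW_succ_left h,
      apW_succ_right (show k < n + 1 by omega)]
    have hk : (k : ℝ) ≤ n := by exact_mod_cast (show k ≤ n by omega)
    push_cast
    have h3 : (n : ℝ) + 1 - k ≠ 0 := by linarith
    have h4 : (n : ℝ) + 1 + 1 - (k + 1) ≠ 0 := by linarith
    have h5 : (n : ℝ) + 1 + (k + 1) ≠ 0 := by positivity
    have h6 : (n : ℝ) + 1 + k + 1 ≠ 0 := by positivity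
    generalize apW (n + 1) k = v at *
    field_simp
    ring

lemma apW_last (n : ℕ) : apW (n + 1) (n + 1) = apW n n * (2 * (2 * n + 1)) / (n + 1) := by
  rw [apW_succ_right (show n < n + 1 by omega), apW_succ_left le_rfl]
  push_cast
  have : (n : ℝ) + 1 - n = 1 := by ring
  rw [this]
  field_simp
  ring

noncomputable def apA (n : ℕ) : ℝ := ∑ k ∈ Finset.range (n + 1), apW n k ^ 2
noncomputable def apBB (n : ℕ) : ℝ := ∑ k ∈ Finset.range (n + 1), apW n k ^ 2 * apC n k

lemma apA_rec (n : ℕ) : ((n : ℝ) + 2) ^ 3 * apA (n + 2) - apP (n + 1) * apA (n + 1)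
    + ((n : ℝ) + 1) ^ 3 * apA n = 0 := by
  have h := apA_part n (n + 1) le_rfl
  simp only [Finset.sum_add_distrib, Finset.sum_sub_distrib, ← Finset.mul_sum] at h
  rw [Finset.sum_range_succ (fun j => apW n j ^ 2), apW_big (show n < n + 1 by omega)] at h
  unfold apA
  rw [Finset.sum_range_succ _ (n + 2), apW_last (n + 1)]
  have e : ((n : ℝ) + 2) ^ 3 * (apW (n + 1) (n + 1) * (2 * (2 * ((n + 1 : ℕ) : ℝ) + 1)) / (((n + 1 : ℕ) : ℝ) + 1)) ^ 2
      = - apB (n + 1) (n + 1) := by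
    unfold apB
    push_cast
    have : (n : ℝ) + 1 + 1 ≠ 0 := by positivity
    field_simp
    ring
  linear_combination h + e

noncomputable def apD (N k : ℕ) : ℝ :=
  apB N k * apC N k + 5 * (2 * (N : ℝ) + 1) * (-1) ^ (k + 1) * k / (N * (N + 1)) * apW N k

/-- product form, valid for all `k ≤ n+1` -/
lemma apWC_pred {n k : ℕ} (h : k ≤ n + 1) : apW n k ^ 2 * apC n k =
    apW n k ^ 2 * apC (n + 1) k
      - (-1 : ℝ) ^ k * apW n k / (((n : ℝ) + 1) ^ 2 * ((n : ℝ) + 1 + k)) := by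
  rcases Nat.lt_or_ge n k with h1 | h1
  · rw [apW_big h1]; simp
  · rw [apC_diff h1]
    have hw := (apW_pos h1).ne'
    have h4 : (n : ℝ) + 1 + k ≠ 0 := by positivity
    field_simp
    ring

lemma apBB_part (n k : ℕ) (h : k ≤ n + 1) :
    ∑ j ∈ Finset.range (k + 1), (((n : ℝ) + 2) ^ 3 * (apW (n + 2) j ^ 2 * apC (n + 2) j)
      - apP (n + 1) * (apW (n + 1) j ^ 2 * apC (n + 1) j)
      + ((n : ℝ) + 1) ^ 3 * (apW n j ^ 2 * apC n j)) = apD (n + 1) k := by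
  induction k with
  | zero =>
    simp only [zero_add, Finset.sum_range_one]
    rw [apWC_pred h, apC_diff h]
    simp [apW_zero, apB, apP, apD]
    have : (n : ℝ) + 1 + 1 ≠ 0 := by positivity
    field_simp
    ring
  | succ k ih =>
    rw [Finset.sum_range_succ, ih (by omega), apWC_pred h, apC_diff h, apC_succ,
      apD, apD, apC_succ, apB, apB, apP, apW_pred h, apW_succ_left h,
      apW_succ_right (show k < n + 1 by omega)]
    have hw := (apW_pos (show k ≤ n + 1 by omega)).ne'
    have hk : (k : ℝ) ≤ n := by exact_mod_cast (show k ≤ n by omega)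
    push_cast
    have h3 : (n : ℝ) + 1 - k ≠ 0 := by linarith
    have h4 : (n : ℝ) + 1 + 1 - (k + 1) ≠ 0 := by linarith
    have h5 : (n : ℝ) + 1 + (k + 1) ≠ 0 := by positivity
    have h6 : (n : ℝ) + 1 + k + 1 ≠ 0 := by positivity
    have h7 : (n : ℝ) + 1 + 1 + (k + 1) ≠ 0 := by positivity
    have h8 : (n : ℝ) + 1 + 1 ≠ 0 := by positivity
    have e2 : ((-1 : ℝ) ^ k) ^ 2 = 1 := by rw [← pow_mul, mul_comm, pow_mul]; simp
    simp only [pow_succ (-1 : ℝ)]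
    generalize apW (n + 1) k = v at *
    generalize apC (n + 1) k = c at *
    generalize (-1 : ℝ) ^ k = e at *
    field_simp
    ring

lemma apBB_rec (n : ℕ) : ((n : ℝ) + 2) ^ 3 * apBB (n + 2) - apP (n + 1) * apBB (n + 1)
    + ((n : ℝ) + 1) ^ 3 * apBB n = 0 := by
  have h := apBB_part n (n + 1) le_rfl
  simp only [Finset.sum_add_distrib, Finset.sum_sub_distrib, ← Finset.mul_sum] at h
  rw [Finset.sum_range_succ (fun j => apW n j ^ 2 * apC n j),
    apW_big (show n < n + 1 by omega)] at h
  unfold apBB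
  rw [Finset.sum_range_succ _ (n + 2)]
  have e : ((n : ℝ) + 2) ^ 3 * (apW (n + 2) (n + 2) ^ 2 * apC (n + 2) (n + 2))
      = - apD (n + 1) (n + 1) := by
    rw [apC_succ, apC_diff le_rfl, apW_last (n + 1)]
    unfold apD apB
    have hw := (apW_pos (le_refl (n + 1))).ne'
    push_cast
    have h8 : (n : ℝ) + 1 + 1 ≠ 0 := by positivity
    have h9 : 2 * ((n : ℝ) + 1) + 1 ≠ 0 := by positivity
    have h10 : (n : ℝ) + 1 + 1 + (n + 1) ≠ 0 := by positivity
    simp only [pow_succ (-1 : ℝ)]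
    generalize apW (n + 1) (n + 1) = v at *
    generalize apC (n + 1) (n + 1) = c at *
    generalize (-1 : ℝ) ^ n = e at *
    field_simp
    ring
  linear_combination h + e

lemma apA_pos (n : ℕ) : 0 < apA n := by
  unfold apA
  apply Finset.sum_pos
  · intro k hk
    have := apW_pos (show k ≤ n by simp at hk; omega)
    positivity
  · simp

lemma apW_ge {n m : ℕ} (h : m + 1 ≤ n) : (n : ℝ) + 1 ≤ apW n (m + 1) := by
  have h1 : 1 ≤ n.choose (m + 1) := Nat.choose_pos h
  have h2 : n + 1 ≤ (n + (m + 1)).choose (m + 1) := by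
    rw [← Nat.choose_symm_add]
    calc n + 1 = (n + 1).choose n := by simp
      _ ≤ _ := Nat.choose_le_choose n (by omega)
  have : n + 1 ≤ n.choose (m + 1) * (n + (m + 1)).choose (m + 1) := by nlinarith
  unfold apW
  exact_mod_cast this

lemma ap_summable : Summable (fun n : ℕ => 1 / ((n : ℝ) + 1) ^ 3) := by
  have := (summable_nat_add_iff 1).2 (Real.summable_one_div_nat_pow.2 (show 1 < 3 by norm_num))
  simpa using this

lemma apC_bound {n k : ℕ} (h : k ≤ n) :
    |apC n k - ∑ m ∈ Finset.range n, 1 / ((m : ℝ) + 1) ^ 3| ≤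
      (∑' n : ℕ, 1 / ((n : ℝ) + 1) ^ 3) * (1 / ((n : ℝ) + 1)) := by
  unfold apC
  rw [add_sub_cancel_left]
  refine (Finset.abs_sum_le_sum_abs _ _).trans ?_
  refine le_trans ?_ (mul_le_mul_of_nonneg_right
    (ap_summable.sum_le_tsum (Finset.range k) (fun i _ => by positivity)) (by positivity))
  rw [Finset.sum_mul]
  apply Finset.sum_le_sum
  intro m hm
  have hw := apW_ge (show m + 1 ≤ n by simp at hm; omega)
  have hw0 : 0 < apW n (m + 1) := lt_of_lt_of_le (by positivity) hw
  rw [abs_div, abs_pow, abs_neg, abs_one, one_pow, abs_of_pos (by positivity), div_mul_div_comm,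
    one_mul]
  apply one_div_le_one_div_of_le (by positivity)
  have : 0 < ((m : ℝ) + 1) ^ 3 := by positivity
  calc ((m : ℝ) + 1) ^ 3 * (n + 1) ≤ ((m : ℝ) + 1) ^ 3 * apW n (m + 1) := by gcongr
    _ ≤ _ := by nlinarith [mul_pos this hw0]

lemma ap_ratio_bound (n : ℕ) :
    |apBB n / apA n - ∑ m ∈ Finset.range n, 1 / ((m : ℝ) + 1) ^ 3| ≤
      (∑' n : ℕ, 1 / ((n : ℝ) + 1) ^ 3) * (1 / ((n : ℝ) + 1)) := by
  have hA := apA_pos n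
  rw [div_sub' hA.ne', abs_div, abs_of_pos hA, div_le_iff₀ hA]
  unfold apBB apA
  rw [Finset.sum_mul, ← Finset.sum_sub_distrib, Finset.mul_sum]
  refine (Finset.abs_sum_le_sum_abs _ _).trans ?_
  apply Finset.sum_le_sum
  intro k hk
  rw [← mul_sub, abs_mul, abs_of_nonneg (by positivity), mul_comm]
  exact mul_le_mul_of_nonneg_right (apC_bound (by simp at hk; omega)) (by positivity)

lemma ap_tendsto : Tendsto (fun n => apBB n / apA n) atTop
    (𝓝 (∑' n : ℕ, 1 / ((n : ℝ) + 1) ^ 3)) := by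
  have h1 := ap_summable.hasSum.tendsto_sum_nat
  have h2 := (tendsto_one_div_add_atTop_nhds_zero_nat (𝕜 := ℝ)).const_mul
    (∑' n : ℕ, 1 / ((n : ℝ) + 1) ^ 3)
  rw [mul_zero] at h2
  have h3 := squeeze_zero_norm (fun n => by
    rw [Real.norm_eq_abs]; exact ap_ratio_bound n) h2
  simpa using h3.add h1

lemma ap_unique (a b q X : ℕ → ℝ)
    (ha : ∀ n : ℕ, 1 ≤ n → a n = (2 * (n : ℝ) - 1) * (17 * (n : ℝ) ^ 2 - 17 * (n : ℝ) + 5))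
    (hb : ∀ n : ℕ, 1 ≤ n → b n = -(n : ℝ) ^ 6)
    (hq : ∀ n : ℕ, q (n + 2) = a (n + 2) * q (n + 1) + b (n + 1) * q n)
    (hX : ∀ n : ℕ, ((n : ℝ) + 2) ^ 3 * X (n + 2) - apP (n + 1) * X (n + 1)
      + ((n : ℝ) + 1) ^ 3 * X n = 0)
    (h0 : q 0 = X 0) (h1 : q 1 = X 1) (n : ℕ) :
    q n = (n.factorial : ℝ) ^ 3 * X n ∧
      q (n + 1) = ((n + 1).factorial : ℝ) ^ 3 * X (n + 1) := by
  induction n with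
  | zero => simp [h0, h1]
  | succ n ih =>
    refine ⟨ih.2, ?_⟩
    rw [hq, ih.1, ih.2, ha _ (by omega), hb _ (by omega), Nat.factorial_succ (n + 1),
      Nat.factorial_succ n]
    have := hX n
    unfold apP at this
    push_cast
    linear_combination (-((n : ℝ) + 1) ^ 3 * (n.factorial : ℝ) ^ 3) * this

theorem stmt_8 
    (a b p q : ℕ → ℝ)
    (ha0 : a 0 = 0)
    (ha : ∀ n : ℕ, 1 ≤ n → a n = (2 * (n : ℝ) - 1) * (17 * (n : ℝ) ^ 2 - 17 * (n : ℝ) + 5))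
    (hb0 : b 0 = 6)
    (hb : ∀ n : ℕ, 1 ≤ n → b n = -(n : ℝ) ^ 6)
    (hp0 : p 0 = a 0) (hq0 : q 0 = 1)
    (hp1 : p 1 = a 0 * a 1 + b 0) (hq1 : q 1 = a 1)
    (hp : ∀ n : ℕ, p (n + 2) = a (n + 2) * p (n + 1) + b (n + 1) * p n)
    (hq : ∀ n : ℕ, q (n + 2) = a (n + 2) * q (n + 1) + b (n + 1) * q n) :
    Tendsto (fun n => p n / q n) atTop (𝓝 (∑' n : ℕ, 1 / ((n : ℝ) + 1) ^ 3)) := by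
  have hQ := ap_unique a b q apA ha hb hq apA_rec
    (by simp [hq0, apA, apW]) (by
      rw [hq1, ha 1 le_rfl]; simp [apA, apW, Finset.sum_range_succ]; norm_num)
  have hP := ap_unique a b p apBB ha hb hp apBB_rec
    (by simp [hp0, ha0, apBB, apC]) (by
      rw [hp1, ha0, hb0]; simp [apBB, apC, apW, Finset.sum_range_succ]; norm_num)
  refine ap_tendsto.congr fun n => ?_
  rw [(hQ n).1, (hP n).1, mul_div_mul_left]
  have := Nat.factorial_pos n
  positivity
end

section
/- Let z be a real number with z ≥ 0. Define a(0) = 0 and a(n) = n³ + (n−1)³ + 2z(z+1)(2n−1) for n ≥ 1, and b(0) = 1 and b(n) = −n⁶ for n ≥ 1. Then the convergents p(n)/q(n) of the continued fraction with partial quotients (a(n), b(n)) converge to ∑_{n≥1} 1/(n+z)³ as n → ∞. (This formula is due to Ramanujan; the sum equals the Hurwitz zeta value ζ(3, z+1) = −ψ''(z+1)/2.) -/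
open Filter Topology

/-- Normalised solutions of the three-term recurrence with given initial values. -/
noncomputable def rsol (y0 y1 z : ℝ) : ℕ → ℝ
  | 0 => y0
  | 1 => y1
  | (n + 2) => ((((n : ℝ) + 2) ^ 3 + ((n : ℝ) + 1) ^ 3 + 2 * z * (z + 1) * (2 * (n : ℝ) + 3))
      * rsol y0 y1 z (n + 1) - ((n : ℝ) + 1) ^ 3 * rsol y0 y1 z n) / ((n : ℝ) + 2) ^ 3

lemma rsol_rec (y0 y1 z : ℝ) (n : ℕ) : ((n : ℝ) + 2) ^ 3 * rsol y0 y1 z (n + 2) =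
    (((n : ℝ) + 2) ^ 3 + ((n : ℝ) + 1) ^ 3 + 2 * z * (z + 1) * (2 * (n : ℝ) + 3))
      * rsol y0 y1 z (n + 1) - ((n : ℝ) + 1) ^ 3 * rsol y0 y1 z n := by
  rw [rsol]
  have : ((n : ℝ) + 2) ^ 3 ≠ 0 := by positivity
  field_simp

/-- denominators -/
noncomputable def ru (z : ℝ) : ℕ → ℝ := rsol 1 (1 + 2 * z * (z + 1)) z
/-- numerators -/
noncomputable def rv (z : ℝ) : ℕ → ℝ := rsol 0 1 z

lemma ru_zero (z : ℝ) : ru z 0 = 1 := by simp [ru, rsol]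
lemma ru_one (z : ℝ) : ru z 1 = 1 + 2 * z * (z + 1) := by simp [ru, rsol]
lemma rv_zero (z : ℝ) : rv z 0 = 0 := by simp [rv, rsol]
lemma rv_one (z : ℝ) : rv z 1 = 1 := by simp [rv, rsol]

lemma ru_rec (z : ℝ) (n : ℕ) : ((n : ℝ) + 2) ^ 3 * ru z (n + 2) =
    (((n : ℝ) + 2) ^ 3 + ((n : ℝ) + 1) ^ 3 + 2 * z * (z + 1) * (2 * (n : ℝ) + 3))
      * ru z (n + 1) - ((n : ℝ) + 1) ^ 3 * ru z n := rsol_rec _ _ z n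
lemma rv_rec (z : ℝ) (n : ℕ) : ((n : ℝ) + 2) ^ 3 * rv z (n + 2) =
    (((n : ℝ) + 2) ^ 3 + ((n : ℝ) + 1) ^ 3 + 2 * z * (z + 1) * (2 * (n : ℝ) + 3))
      * rv z (n + 1) - ((n : ℝ) + 1) ^ 3 * rv z n := rsol_rec _ _ z n

lemma ru_mono_aux (z : ℝ) (hz : 0 ≤ z) (n : ℕ) : 1 ≤ ru z n ∧ ru z n ≤ ru z (n + 1) := by
  induction n with
  | zero =>
    rw [ru_zero, ru_one]
    refine ⟨le_rfl, ?_⟩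
    have : 0 ≤ 2 * z * (z + 1) := by positivity
    linarith
  | succ n ih =>
    obtain ⟨h1, h2⟩ := ih
    refine ⟨h1.trans h2, ?_⟩
    have h := ru_rec z n
    have hc : (0 : ℝ) < ((n : ℝ) + 2) ^ 3 := by positivity
    have h3 : 0 ≤ ((n : ℝ) + 1) ^ 3 * (ru z (n + 1) - ru z n) :=
      mul_nonneg (by positivity) (by linarith)
    have h4 : 0 ≤ 2 * z * (z + 1) * (2 * (n : ℝ) + 3) * ru z (n + 1) :=
      mul_nonneg (by positivity) (by linarith)
    refine le_of_mul_le_mul_left ?_ hc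
    show _ ≤ ((n : ℝ) + 2) ^ 3 * ru z (n + 2)
    rw [h]
    linarith

lemma one_le_ru (z : ℝ) (hz : 0 ≤ z) (n : ℕ) : 1 ≤ ru z n := (ru_mono_aux z hz n).1

lemma ru_ge (z : ℝ) (hz : 0 ≤ z) (n : ℕ) : 1 + 2 * z * (z + 1) ≤ ru z (n + 1) := by
  induction n with
  | zero => rw [ru_one]
  | succ n ih => exact ih.trans (ru_mono_aux z hz (n + 1)).2

lemma casoratian (z : ℝ) (n : ℕ) :
    ((n : ℝ) + 1) ^ 3 * (rv z (n + 1) * ru z n - rv z n * ru z (n + 1)) = 1 := by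
  induction n with
  | zero => simp [ru_zero, rv_zero, rv_one]
  | succ n ih =>
    push_cast
    have hu := ru_rec z n
    have hv := rv_rec z n
    show ((n : ℝ) + 1 + 1) ^ 3 * (rv z (n + 2) * ru z (n + 1) - rv z (n + 1) * ru z (n + 2)) = 1
    linear_combination ih + ru z (n + 1) * hv - rv z (n + 1) * hu

lemma shift_general (z : ℝ) (y Y : ℕ → ℝ)
    (hy : ∀ n : ℕ, ((n : ℝ) + 2) ^ 3 * y (n + 2) =
      (((n : ℝ) + 2) ^ 3 + ((n : ℝ) + 1) ^ 3 + 2 * z * (z + 1) * (2 * (n : ℝ) + 3))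
        * y (n + 1) - ((n : ℝ) + 1) ^ 3 * y n)
    (hY : ∀ n : ℕ, ((n : ℝ) + 2) ^ 3 * Y (n + 2) =
      (((n : ℝ) + 2) ^ 3 + ((n : ℝ) + 1) ^ 3 + 2 * (z + 1) * (z + 1 + 1) * (2 * (n : ℝ) + 3))
        * Y (n + 1) - ((n : ℝ) + 1) ^ 3 * Y n)
    (h0 : Y 1 = (z + 1 + 1) * ((z + 1) ^ 2 + (z + 1) + 1) * y 1 - y 0)
    (h1 : Y 2 = (z + 1 + 2) * ((z + 1) ^ 2 + (z + 1) * 2 + 4) * y 2 - 8 * y 1) (n : ℕ) :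
    Y (n + 1) = (z + 1 + (n + 1)) * ((z + 1) ^ 2 + (z + 1) * (n + 1) + ((n : ℝ) + 1) ^ 2) * y (n + 1)
      - ((n : ℝ) + 1) ^ 3 * y n := by
  induction n using Nat.twoStepInduction with
  | zero => simpa using h0
  | one => norm_num; linear_combination h1
  | more n ih1 ih2 =>
    have e1 := hY (n + 1)
    have e2 := hy (n + 1)
    have e3 := hy n
    simp only [show n + 1 + 2 = n + 3 from rfl, show n + 2 + 1 = n + 3 from rfl,
      show n + 1 + 1 = n + 2 from rfl] at *
    push_cast at *
    have hc : ((n : ℝ) + 3) ^ 3 ≠ 0 := by positivity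
    refine mul_left_cancel₀ hc ?_
    linear_combination e1
      - (z + 1 + ((n : ℝ) + 3)) * ((z + 1) ^ 2 + (z + 1) * (n + 3) + ((n : ℝ) + 3) ^ 2) * e2
      + (((n : ℝ) + 3) ^ 3 + ((n : ℝ) + 2) ^ 3 + 2 * (z + 1) * (z + 1 + 1) * (2 * (n : ℝ) + 5)) * ih2
      - ((n : ℝ) + 2) ^ 3 * ih1 + ((n : ℝ) + 2) ^ 3 * e3

lemma shift_u (z : ℝ) (n : ℕ) : (z + 1) ^ 3 * ru (z + 1) (n + 1) =
    (z + 1 + (n + 1)) * ((z + 1) ^ 2 + (z + 1) * (n + 1) + ((n : ℝ) + 1) ^ 2) * ru z (n + 1)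
      - ((n : ℝ) + 1) ^ 3 * ru z n := by
  refine shift_general z (ru z) (fun n => (z + 1) ^ 3 * ru (z + 1) n) (ru_rec z) ?_ ?_ ?_ n
  · intro n
    linear_combination (z + 1) ^ 3 * ru_rec (z + 1) n
  · simp only [ru_one, ru_zero]; ring
  · have e1 := ru_rec z 0
    have e2 := ru_rec (z + 1) 0
    norm_num [ru_one, ru_zero] at e1 e2 ⊢
    linear_combination (z + 1) ^ 3 / 8 * e2
      - (z + 1 + 2) * ((z + 1) ^ 2 + (z + 1) * 2 + 4) / 8 * e1

lemma shift_v (z : ℝ) (n : ℕ) : (z + 1) ^ 3 * rv (z + 1) (n + 1) + ru (z + 1) (n + 1) =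
    (z + 1 + (n + 1)) * ((z + 1) ^ 2 + (z + 1) * (n + 1) + ((n : ℝ) + 1) ^ 2) * rv z (n + 1)
      - ((n : ℝ) + 1) ^ 3 * rv z n := by
  refine shift_general z (rv z) (fun n => (z + 1) ^ 3 * rv (z + 1) n + ru (z + 1) n)
    (rv_rec z) ?_ ?_ ?_ n
  · intro n
    linear_combination (z + 1) ^ 3 * rv_rec (z + 1) n + ru_rec (z + 1) n
  · simp only [ru_one, rv_one, rv_zero]; ring
  · have e1 := rv_rec z 0
    have e2 := rv_rec (z + 1) 0
    have e3 := ru_rec (z + 1) 0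
    norm_num [ru_one, ru_zero, rv_one, rv_zero] at e1 e2 e3 ⊢
    linear_combination (z + 1) ^ 3 / 8 * e2 + e3 / 8
      - (z + 1 + 2) * ((z + 1) ^ 2 + (z + 1) * 2 + 4) / 8 * e1

lemma ratio_shift (z : ℝ) (hz : 0 ≤ z) (n : ℕ) :
    rv z (n + 1) / ru z (n + 1) - rv (z + 1) (n + 1) / ru (z + 1) (n + 1) =
      1 / (z + 1) ^ 3 - 1 / ((z + 1) ^ 3 * ru z (n + 1) * ru (z + 1) (n + 1)) := by
  have h1 : ru z (n + 1) ≠ 0 := by linarith [one_le_ru z hz (n + 1)]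
  have h2 : ru (z + 1) (n + 1) ≠ 0 := by linarith [one_le_ru (z + 1) (by linarith) (n + 1)]
  have h3 : z + 1 ≠ 0 := by linarith
  have su := shift_u z n
  have sv := shift_v z n
  have c := casoratian z n
  field_simp
  linear_combination rv z (n + 1) * su - ru z (n + 1) * sv - c

lemma err_bound (z : ℝ) (hz : 0 ≤ z) (n : ℕ) :
    1 / ((z + 1) ^ 3 * ru z (n + 1) * ru (z + 1) (n + 1)) ≤ 1 / (z + 1) ^ 2 * (1 / ((n : ℝ) + 1)) := by
  have hu := one_le_ru z hz (n + 1)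
  have hm := (ru_mono_aux z hz n).2
  have hU := one_le_ru (z + 1) (by linarith) (n + 1)
  have su := shift_u z n
  rw [← one_div_mul_one_div_rev, mul_comm, one_div_mul_one_div_rev, one_div_mul_one_div_rev]
  refine one_div_le_one_div_of_le (by positivity) ?_
  have hn : (0 : ℝ) ≤ n := n.cast_nonneg
  have hA : (z + 1) ^ 2 * ((n : ℝ) + 1) ≤ (z + 1) ^ 3 * ru (z + 1) (n + 1) := by
    rw [su]
    have h1 : ((n : ℝ) + 1) ^ 3 * ru z n ≤ ((n : ℝ) + 1) ^ 3 * ru z (n + 1) := by gcongr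
    have h2 : (z + 1) ^ 2 * ((n : ℝ) + 1) * 1 ≤
        ((z + 1) ^ 3 + 2 * (z + 1) ^ 2 * (n + 1) + 2 * (z + 1) * ((n : ℝ) + 1) ^ 2) * ru z (n + 1) := by
      gcongr
      have : 0 ≤ (z + 1) ^ 3 + (z + 1) ^ 2 * ((n : ℝ) + 1) + 2 * (z + 1) * ((n : ℝ) + 1) ^ 2 := by
        positivity
      linarith
    linarith
  have h0 : 0 ≤ (z + 1) ^ 3 * ru (z + 1) (n + 1) := by positivity
  nlinarith

lemma ratio_bound (z : ℝ) (hz : 0 ≤ z) (n : ℕ) :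
    0 ≤ rv z n / ru z n ∧ rv z n / ru z n ≤ n / (1 + z) := by
  induction n with
  | zero => simp [rv_zero]
  | succ n ih =>
    have h1 := one_le_ru z hz n
    have h2 := one_le_ru z hz (n + 1)
    have h3 := ru_ge z hz n
    have c := casoratian z n
    have e : rv z (n + 1) / ru z (n + 1) = rv z n / ru z n
        + 1 / (((n : ℝ) + 1) ^ 3 * ru z n * ru z (n + 1)) := by
      field_simp
      linear_combination c
    have b : 1 / (((n : ℝ) + 1) ^ 3 * ru z n * ru z (n + 1)) ≤ 1 / (1 + z) := by
      refine one_div_le_one_div_of_le (by positivity) ?_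
      have hn : (1 : ℝ) ≤ ((n : ℝ) + 1) ^ 3 := one_le_pow₀ (by linarith [n.cast_nonneg (α := ℝ)])
      have : 1 * 1 * ru z (n + 1) ≤ ((n : ℝ) + 1) ^ 3 * ru z n * ru z (n + 1) := by gcongr
      nlinarith
    have b0 : 0 ≤ 1 / (((n : ℝ) + 1) ^ 3 * ru z n * ru z (n + 1)) := by positivity
    rw [e]
    push_cast
    rw [add_div]
    constructor <;> linarith [ih.1, ih.2]

lemma telescoped (z : ℝ) (hz : 0 ≤ z) (n N : ℕ) :
    rv z (n + 1) / ru z (n + 1) ≤ rv (z + N) (n + 1) / ru (z + N) (n + 1)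
      + ∑ j ∈ Finset.range N, 1 / (((j : ℝ) + 1) + z) ^ 3 ∧
    ∑ j ∈ Finset.range N, 1 / (((j : ℝ) + 1) + z) ^ 3
      - (∑ j ∈ Finset.range N, 1 / ((j : ℝ) + 1) ^ 2) * (1 / ((n : ℝ) + 1))
      ≤ rv z (n + 1) / ru z (n + 1) - rv (z + N) (n + 1) / ru (z + N) (n + 1) := by
  induction N with
  | zero => simp
  | succ N ih =>
    rw [Finset.sum_range_succ, Finset.sum_range_succ]
    have hN : 0 ≤ z + (N : ℝ) := by positivity
    have r := ratio_shift (z + N) hN n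
    have e := err_bound (z + N) hN n
    have h1 := one_le_ru (z + N) hN (n + 1)
    have h2 := one_le_ru (z + N + 1) (by linarith) (n + 1)
    have e0 : 0 ≤ 1 / ((z + N + 1) ^ 3 * ru (z + N) (n + 1) * ru (z + N + 1) (n + 1)) := by
      positivity
    have e1 : 1 / (z + N + 1) ^ 2 * (1 / ((n : ℝ) + 1)) ≤ 1 / ((N : ℝ) + 1) ^ 2 * (1 / ((n : ℝ) + 1)) := by
      gcongr
      linarith
    push_cast
    rw [show z + ((N : ℝ) + 1) = z + N + 1 by ring, show ((N : ℝ) + 1) + z = z + N + 1 by ring, add_mul]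
    constructor <;> linarith [ih.1, ih.2]

lemma ratio_tendsto (z : ℝ) (hz : 0 ≤ z) :
    Tendsto (fun n => rv z n / ru z n) atTop (𝓝 (∑' n : ℕ, 1 / (((n : ℝ) + 1) + z) ^ 3)) := by
  have s2 : Summable (fun j : ℕ => 1 / ((j : ℝ) + 1) ^ 2) := by
    have := (summable_nat_add_iff 1).2 (Real.summable_one_div_nat_pow.2 (one_lt_two))
    simpa using this
  have s3 : Summable (fun j : ℕ => 1 / (((j : ℝ) + 1) + z) ^ 3) := by
    refine Summable.of_nonneg_of_le (fun j => by positivity) (fun j => ?_) s2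
    refine one_div_le_one_div_of_le (by positivity) ?_
    have hj : (0 : ℝ) ≤ j := j.cast_nonneg
    calc ((j : ℝ) + 1) ^ 2 ≤ ((j : ℝ) + 1) ^ 3 := pow_le_pow_right₀ (by linarith) (by norm_num)
      _ ≤ _ := pow_le_pow_left₀ (by linarith) (by linarith) 3
  have t2 := s2.hasSum.tendsto_sum_nat
  have t3 := s3.hasSum.tendsto_sum_nat
  have hr : ∀ n : ℕ, Tendsto (fun N : ℕ => rv (z + N) (n + 1) / ru (z + N) (n + 1)) atTop (𝓝 0) := by
    intro n
    have hl : Tendsto (fun N : ℕ => ((n + 1 : ℕ) : ℝ) / (1 + (z + N))) atTop (𝓝 0) := by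
      refine Tendsto.const_div_atTop ?_ _
      exact tendsto_atTop_add_const_left _ _ (tendsto_atTop_add_const_left _ _ tendsto_natCast_atTop_atTop)
    exact squeeze_zero (fun N => (ratio_bound (z + N) (by positivity) (n + 1)).1)
      (fun N => (ratio_bound (z + N) (by positivity) (n + 1)).2) hl
  rw [← tendsto_add_atTop_iff_nat 1]
  set S := ∑' n : ℕ, 1 / (((n : ℝ) + 1) + z) ^ 3
  set C := ∑' j : ℕ, 1 / ((j : ℝ) + 1) ^ 2
  have lo : Tendsto (fun n : ℕ => S - C * (1 / ((n : ℝ) + 1))) atTop (𝓝 S) := by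
    simpa using (tendsto_one_div_add_atTop_nhds_zero_nat (𝕜 := ℝ)).const_mul C |>.const_sub S
  refine tendsto_of_tendsto_of_tendsto_of_le_of_le lo tendsto_const_nhds (fun n => ?_) (fun n => ?_)
  · have := le_of_tendsto_of_tendsto' (t3.sub (t2.mul_const (1 / ((n : ℝ) + 1))))
      ((hr n).const_sub _) (fun N => (telescoped z hz n N).2)
    simpa using this
  · have := ge_of_tendsto' ((hr n).add t3) (fun N => (telescoped z hz n N).1)
    simpa using this

theorem stmt_9 (z : ℝ) (hz : 0 ≤ z)
    (a b p q : ℕ → ℝ)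
    (ha0 : a 0 = 0)
    (ha : ∀ n : ℕ, 1 ≤ n → a n = (n : ℝ) ^ 3 + ((n : ℝ) - 1) ^ 3 + 2 * z * (z + 1) * (2 * (n : ℝ) - 1))
    (hb0 : b 0 = 1)
    (hb : ∀ n : ℕ, 1 ≤ n → b n = -(n : ℝ) ^ 6)
    (hp0 : p 0 = a 0) (hq0 : q 0 = 1)
    (hp1 : p 1 = a 0 * a 1 + b 0) (hq1 : q 1 = a 1)
    (hp : ∀ n : ℕ, p (n + 2) = a (n + 2) * p (n + 1) + b (n + 1) * p n)
    (hq : ∀ n : ℕ, q (n + 2) = a (n + 2) * q (n + 1) + b (n + 1) * q n) :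
    Tendsto (fun n => p n / q n) atTop (𝓝 (∑' n : ℕ, 1 / (((n : ℝ) + 1) + z) ^ 3)) := by
  have key : ∀ (x y : ℕ → ℝ), (∀ n : ℕ, x (n + 2) = a (n + 2) * x (n + 1) + b (n + 1) * x n) →
      (∀ n : ℕ, ((n : ℝ) + 2) ^ 3 * y (n + 2) =
        (((n : ℝ) + 2) ^ 3 + ((n : ℝ) + 1) ^ 3 + 2 * z * (z + 1) * (2 * (n : ℝ) + 3))
          * y (n + 1) - ((n : ℝ) + 1) ^ 3 * y n) → x 0 = y 0 → x 1 = y 1 →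
      ∀ n : ℕ, x n = (n.factorial : ℝ) ^ 3 * y n := by
    intro x y hx hy h0 h1 n
    induction n using Nat.twoStepInduction with
    | zero => simpa using h0
    | one => simpa using h1
    | more n ih1 ih2 =>
      rw [hx, ih1, ih2, ha (n + 2) (by omega), hb (n + 1) (by omega), Nat.factorial_succ (n + 1),
        Nat.factorial_succ n]
      push_cast
      linear_combination (-(((n : ℝ) + 1) * n.factorial) ^ 3) * hy n
  have kp := key p (rv z) hp (rv_rec z) (by rw [hp0, ha0, rv_zero])
    (by rw [hp1, ha0, hb0, rv_one]; ring)
  have kq := key q (ru z) hq (ru_rec z) (by rw [hq0, ru_zero])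
    (by rw [hq1, ha 1 le_rfl, ru_one]; push_cast; ring)
  refine (ratio_tendsto z hz).congr (fun n => ?_)
  have : ((n.factorial : ℝ)) ^ 3 ≠ 0 := by positivity
  rw [kp, kq, mul_div_mul_left _ _ this]
end

section
/- Define a(0) = 1/2, a(1) = 3, and a(n) = 5(2n−1) for n ≥ 2, and b(0) = 2 and b(n) = −(9n² − 4) for n ≥ 1. Then the convergents p(n)/q(n) of the continued fraction with partial quotients (a(n), b(n)) converge to 2^{1/3} (the real cube root of 2) as n → ∞. -/
open Filter Topology

/-- The basic integrals. -/
noncomputable def cfJ (n : ℕ) : ℝ :=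
  ∫ x in (1:ℝ)..4, (5 - x - 4 / x) ^ n * x ^ (-(1:ℝ) / 3)

/-- The normalising factors. -/
noncomputable def cfK : ℕ → ℝ
  | 0 => 1 / 3
  | n + 1 => (9 * ((n:ℝ) + 1) ^ 2 - 4) / (9 * ((n:ℝ) + 1)) * cfK n

lemma cfK_succ (n : ℕ) : cfK (n + 1) =
    (9 * ((n:ℝ) + 1) ^ 2 - 4) / (9 * ((n:ℝ) + 1)) * cfK n := rfl

lemma cfK_pos (n : ℕ) : 0 < cfK n := by
  induction n with
  | zero => norm_num [cfK]
  | succ n ih =>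
    have h : (0:ℝ) ≤ n := n.cast_nonneg
    have : 0 < 9 * ((n:ℝ) + 1) ^ 2 - 4 := by nlinarith
    rw [cfK]; positivity

lemma cf_ne {x : ℝ} (hx : x ∈ Set.uIcc (1:ℝ) 4) : 0 < x := by
  rw [Set.uIcc_of_le (by norm_num)] at hx
  linarith [hx.1]

lemma cf_int (n : ℕ) : IntervalIntegrable
    (fun x : ℝ => (5 - x - 4 / x) ^ n * x ^ (-(1:ℝ) / 3)) MeasureTheory.volume 1 4 := by
  apply ContinuousOn.intervalIntegrable
  intro x hx
  have := cf_ne hx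
  apply ContinuousAt.continuousWithinAt
  refine ContinuousAt.mul (ContinuousAt.pow ?_ n) ?_
  · exact (continuousAt_const.sub continuousAt_id).sub
      (continuousAt_const.div continuousAt_id this.ne')
  · exact Real.continuousAt_rpow_const _ _ (Or.inl this.ne')

lemma cf_rpow {x : ℝ} (hx : 0 < x) : x ^ ((2:ℝ) / 3) = x * x ^ (-(1:ℝ) / 3) := by
  rw [mul_comm, ← Real.rpow_add_one hx.ne']; norm_num

lemma cf_four : (4:ℝ) ^ ((2:ℝ) / 3) = 2 * (2:ℝ) ^ ((1:ℝ) / 3) := by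
  rw [show (4:ℝ) = 2 ^ (2:ℝ) by norm_num, ← Real.rpow_mul (by norm_num),
    mul_comm 2 ((2:ℝ) ^ ((1:ℝ) / 3)), ← Real.rpow_add_one (by norm_num)]
  norm_num

lemma cf_drpow {x : ℝ} (hx : 0 < x) :
    HasDerivAt (fun x : ℝ => x ^ ((2:ℝ) / 3)) (2 / 3 * x ^ (-(1:ℝ) / 3)) x := by
  have := Real.hasDerivAt_rpow_const (x := x) (p := (2:ℝ) / 3) (Or.inl hx.ne')
  convert this using 3; norm_num

lemma cf_dinv {x : ℝ} (hx : 0 < x) (c : ℝ) :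
    HasDerivAt (fun x : ℝ => c / x) (-c / x ^ 2) x := by
  have := (hasDerivAt_const x c).div (hasDerivAt_id x) hx.ne'
  refine this.congr_deriv ?_
  simp

lemma cfJ_zero : cfJ 0 = 3 / 2 * (2 * (2:ℝ) ^ ((1:ℝ) / 3) - 1) := by
  rw [cfJ, intervalIntegral.integral_eq_sub_of_hasDerivAt
    (f := fun x : ℝ => 3 / 2 * x ^ ((2:ℝ) / 3)) _ (cf_int 0)]
  · rw [cf_four, Real.one_rpow]; ring
  · intro x hx
    refine ((cf_drpow (cf_ne hx)).const_mul (3 / 2)).congr_deriv ?_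
    ring

lemma cfJ_one : cfJ 1 = 81 / 5 * (2:ℝ) ^ ((1:ℝ) / 3) - 189 / 10 := by
  rw [cfJ, intervalIntegral.integral_eq_sub_of_hasDerivAt
    (f := fun x : ℝ => x ^ ((2:ℝ) / 3) * (15 / 2 - 3 / 5 * x + 12 / x)) _ (cf_int 1)]
  · rw [cf_four, Real.one_rpow]; ring
  · intro x hx
    have hx := cf_ne hx
    refine ((cf_drpow hx).mul ((((hasDerivAt_id x).const_mul (3 / 5)).const_sub (15 / 2)).add
      (cf_dinv hx 12))).congr_deriv ?_
    rw [cf_rpow hx]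
    simp only [id, Pi.add_apply]
    field_simp
    ring

lemma cfJ_rec (n : ℕ) : (9 * ((n:ℝ) + 2) ^ 2 - 4) * cfJ (n + 2) =
    45 * (2 * (n:ℝ) + 3) * (n + 2) * cfJ (n + 1) - 81 * ((n:ℝ) + 1) * (n + 2) * cfJ n := by
  have key : ∫ x in (1:ℝ)..4,
      ((((n:ℝ) + 2) ^ 2 - 4 / 9) * ((5 - x - 4 / x) ^ (n + 2) * x ^ (-(1:ℝ) / 3))
      - 5 * (2 * (n:ℝ) + 3) * (n + 2) * ((5 - x - 4 / x) ^ (n + 1) * x ^ (-(1:ℝ) / 3))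
      + 9 * ((n:ℝ) + 1) * (n + 2) * ((5 - x - 4 / x) ^ n * x ^ (-(1:ℝ) / 3))) = 0 := by
    rw [intervalIntegral.integral_eq_sub_of_hasDerivAt
      (f := fun x : ℝ => x ^ ((2:ℝ) / 3) * ((5 - x - 4 / x) ^ (n + 1) *
        (((n:ℝ) + 2) * (4 / x - x) - 2 / 3 * (5 - x - 4 / x))))]
    · norm_num
    · intro x hx
      have hx := cf_ne hx
      have hf : HasDerivAt (fun x : ℝ => 5 - x - 4 / x) (-1 - -4 / x ^ 2) x :=
        ((hasDerivAt_id x).const_sub 5).sub (cf_dinv hx 4)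
      have hg : HasDerivAt (fun x : ℝ => 4 / x - x) (-4 / x ^ 2 - 1) x :=
        (cf_dinv hx 4).sub (hasDerivAt_id x)
      refine ((cf_drpow hx).mul ((hf.pow (n + 1)).mul
        ((hg.const_mul ((n:ℝ) + 2)).sub (hf.const_mul (2 / 3))))).congr_deriv ?_
      simp only [Pi.pow_apply, Pi.mul_apply, Pi.sub_apply, Nat.add_sub_cancel]
      rw [cf_rpow hx, pow_succ _ (n + 1), pow_succ _ n]
      generalize x ^ (-(1:ℝ) / 3) = y
      generalize (5 - x - 4 / x) ^ n = z
      push_cast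
      field_simp
      ring
    · exact (((cf_int (n + 2)).const_mul _).sub ((cf_int (n + 1)).const_mul _)).add
        ((cf_int n).const_mul _)
  rw [intervalIntegral.integral_add (((cf_int (n + 2)).const_mul _).sub
    ((cf_int (n + 1)).const_mul _)) ((cf_int n).const_mul _),
    intervalIntegral.integral_sub ((cf_int (n + 2)).const_mul _)
    ((cf_int (n + 1)).const_mul _)] at key
  simp only [intervalIntegral.integral_const_mul] at key
  simp only [cfJ]
  linarith

lemma cfJ_bound (n : ℕ) : |cfJ n| ≤ 3 := by
  have := intervalIntegral.norm_integral_le_of_norm_le_const (a := (1:ℝ)) (b := 4) (C := 1)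
    (f := fun x : ℝ => (5 - x - 4 / x) ^ n * x ^ (-(1:ℝ) / 3)) ?_
  · rw [Real.norm_eq_abs] at this
    rw [cfJ]
    norm_num at this ⊢
    exact this
  · intro x hx
    rw [Set.uIoc_of_le (by norm_num)] at hx
    have h1 : 1 < x := hx.1
    have h4 := hx.2
    have h0 : 0 < x := by linarith
    have e1 : 0 ≤ 5 - x - 4 / x := by
      rw [show 5 - x - 4 / x = (x - 1) * (4 - x) / x by field_simp; ring]
      apply div_nonneg (mul_nonneg _ _) h0.le <;> linarith
    have e2 : 5 - x - 4 / x ≤ 1 := by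
      have : 1 - (5 - x - 4 / x) = (x - 2) ^ 2 / x := by field_simp; ring
      have : 0 ≤ (x - 2) ^ 2 / x := by positivity
      linarith
    rw [Real.norm_eq_abs, abs_of_nonneg (by positivity)]
    exact mul_le_one₀ (pow_le_one₀ e1 e2) (by positivity)
      (Real.rpow_le_one_of_one_le_of_nonpos h1.le (by norm_num))

theorem stmt_11 
    (a b p q : ℕ → ℝ)
    (ha0 : a 0 = 1 / 2)
    (ha1 : a 1 = 3)
    (ha : ∀ n : ℕ, 2 ≤ n → a n = 5 * (2 * (n : ℝ) - 1))
    (hb0 : b 0 = 2)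
    (hb : ∀ n : ℕ, 1 ≤ n → b n = -(9 * (n : ℝ) ^ 2 - 4))
    (hp0 : p 0 = a 0) (hq0 : q 0 = 1)
    (hp1 : p 1 = a 0 * a 1 + b 0) (hq1 : q 1 = a 1)
    (hp : ∀ n : ℕ, p (n + 2) = a (n + 2) * p (n + 1) + b (n + 1) * p n)
    (hq : ∀ n : ℕ, q (n + 2) = a (n + 2) * q (n + 1) + b (n + 1) * q n) :
    Tendsto (fun n => p n / q n) atTop (𝓝 ((2 : ℝ) ^ ((1 : ℝ) / 3))) := by
  set S : ℝ := (2 : ℝ) ^ ((1 : ℝ) / 3) with hS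
  have hA : ∀ n : ℕ, a (n + 2) = 5 * (2 * (n:ℝ) + 3) := by
    intro n; rw [ha _ (by omega)]; push_cast; ring
  have hB : ∀ n : ℕ, b (n + 1) = -(9 * ((n:ℝ) + 1) ^ 2 - 4) := by
    intro n; rw [hb _ (by omega)]; push_cast; ring
  have hr : ∀ n : ℕ, p n - S * q n = - (cfK n * cfJ n) ∧
      p (n + 1) - S * q (n + 1) = - (cfK (n + 1) * cfJ (n + 1)) := by
    intro n
    induction n with
    | zero =>
      simp only [zero_add, cfK, cfJ_zero, cfJ_one, hp0, hq0, hp1, hq1, ha0, ha1, hb0, ← hS]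
      constructor
      · ring
      · push_cast; ring
    | succ n ih =>
      obtain ⟨h0, h1⟩ := ih
      refine ⟨h1, ?_⟩
      have e : p (n + 2) - S * q (n + 2) =
          a (n + 2) * (p (n + 1) - S * q (n + 1)) + b (n + 1) * (p n - S * q n) := by
        rw [hp, hq]; ring
      change p (n + 2) - S * q (n + 2) = - (cfK (n + 2) * cfJ (n + 2))
      rw [e, h0, h1, hA, hB, cfK_succ (n + 1), cfK_succ n]
      have hn : (0:ℝ) < (n:ℝ) + 1 := by positivity
      have hJ : cfJ n = (45 * (2 * (n:ℝ) + 3) * (n + 2) * cfJ (n + 1) -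
          (9 * ((n:ℝ) + 2) ^ 2 - 4) * cfJ (n + 2)) / (81 * ((n:ℝ) + 1) * (n + 2)) := by
        rw [cfJ_rec]; field_simp; ring
      rw [hJ]
      push_cast
      have h2 : (n:ℝ) + 1 + 1 = n + 2 := by ring
      rw [h2]
      field_simp
      ring
  have hg : ∀ n : ℕ, 0 < q n ∧
      2 * (9 * ((n:ℝ) + 1) ^ 2 - 4) * q n ≤ 9 * ((n:ℝ) + 1) * q (n + 1) := by
    intro n
    induction n with
    | zero => norm_num [hq0, hq1, ha1]
    | succ n ih =>
      obtain ⟨h0, h1⟩ := ih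
      have hn : (0:ℝ) ≤ n := n.cast_nonneg
      have hc : 0 < 9 * ((n:ℝ) + 1) ^ 2 - 4 := by nlinarith
      have hpos : 0 < q (n + 1) := by
        have : 0 < 9 * ((n:ℝ) + 1) * q (n + 1) := lt_of_lt_of_le (by positivity) h1
        exact pos_of_mul_pos_right this (by positivity)
      refine ⟨hpos, ?_⟩
      change _ ≤ 9 * (((n + 1 : ℕ):ℝ) + 1) * q (n + 2)
      rw [hq, hA, hB]
      push_cast
      have e : (5 * (2 * (n:ℝ) + 3) - 9 / 2 * (n + 1)) * q (n + 1) ≤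
          5 * (2 * (n:ℝ) + 3) * q (n + 1) + -(9 * ((n:ℝ) + 1) ^ 2 - 4) * q n := by linarith
      refine le_trans ?_ (mul_le_mul_of_nonneg_left e (by positivity))
      rw [← mul_assoc]
      apply mul_le_mul_of_nonneg_right _ hpos.le
      nlinarith
  have hQ : ∀ n : ℕ, cfK n * 2 ^ n ≤ q n := by
    intro n
    induction n with
    | zero => norm_num [cfK, hq0]
    | succ n ih =>
      have hn : (0:ℝ) ≤ n := n.cast_nonneg
      have hc : 0 < 9 * ((n:ℝ) + 1) ^ 2 - 4 := by nlinarith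
      have h := (hg n).2
      have h3 : 2 * (9 * ((n:ℝ) + 1) ^ 2 - 4) * (cfK n * 2 ^ n) ≤
        9 * ((n:ℝ) + 1) * q (n + 1) :=
        le_trans (mul_le_mul_of_nonneg_left ih (by positivity)) h
      rw [cfK, div_mul_eq_mul_div, div_mul_eq_mul_div, div_le_iff₀ (by positivity),
        pow_succ (2:ℝ) n]
      linarith
  rw [tendsto_iff_norm_sub_tendsto_zero]
  have hlim : Tendsto (fun n : ℕ => 3 * (1 / 2 : ℝ) ^ n) atTop (𝓝 0) := by
    simpa using (tendsto_pow_atTop_nhds_zero_of_lt_one (r := (1 / 2 : ℝ))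
      (by norm_num) (by norm_num)).const_mul 3
  refine squeeze_zero (fun n => norm_nonneg _) (fun n => ?_) hlim
  have hq' := (hg n).1
  have e : p n / q n - S = (p n - S * q n) / q n := by field_simp
  rw [e, (hr n).1, Real.norm_eq_abs, abs_div, abs_neg, abs_mul, abs_of_pos hq',
    abs_of_pos (cfK_pos n), div_le_iff₀ hq']
  calc cfK n * |cfJ n| ≤ cfK n * 3 := mul_le_mul_of_nonneg_left (cfJ_bound n) (cfK_pos n).le
    _ = 3 * (1 / 2 : ℝ) ^ n * (cfK n * 2 ^ n) := by
      have : (1 / 2 : ℝ) ^ n * 2 ^ n = 1 := by rw [← mul_pow]; norm_num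
      linear_combination (-3 * cfK n) * this
    _ ≤ _ := mul_le_mul_of_nonneg_left (hQ n) (by positivity)
end

section
/- Let G₃ = ∑_{n≥1} χ₋₃(n)/n², where χ₋₃(n) = 1 if n ≡ 1 (mod 3), χ₋₃(n) = −1 if n ≡ 2 (mod 3), and χ₋₃(n) = 0 if n ≡ 0 (mod 3); that is, G₃ = 1 − 1/2² + 1/4² − 1/5² + ⋯. Define a(0) = 3/4 and a(n) = (2n−1)(9n² − 9n + 22) for n ≥ 1, and b(0) = 2/3 and b(n) = −9n⁴(9n² − 1) for n ≥ 1. Then the convergents p(n)/q(n) of the continued fraction with partial quotients (a(n), b(n)) converge to G₃ as n → ∞. -/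
open Filter Topology

noncomputable section

/-- Solutions of the three-term recurrence with parameter `k`. -/
def cfV (k x y : ℝ) : ℕ → ℝ
  | 0 => x
  | 1 => y
  | n + 2 => (2 * (n : ℝ) + 3) * (9 * ((n : ℝ) + 1) * ((n : ℝ) + 2) + 4 + 18 * k ^ 2) * cfV k x y (n + 1)
      + (-(9 * ((n : ℝ) + 1) ^ 4 * (9 * ((n : ℝ) + 1) ^ 2 - 1))) * cfV k x y n

/-- Partial sums of the L-series. -/
def cfS : ℕ → ℝ
  | 0 => 0
  | k + 1 => cfS k + (1 / (3 * (k : ℝ) + 1) ^ 2 - 1 / (3 * (k : ℝ) + 2) ^ 2)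

def cfQ (k n : ℕ) : ℝ := cfV k 1 (4 + 18 * (k : ℝ) ^ 2) n
def cfA (k n : ℕ) : ℝ := cfV k (cfS k) (cfS k * (4 + 18 * (k : ℝ) ^ 2) + 2 / 3) n

def cfAlpha (k n : ℝ) : ℝ :=
  (81 * k ^ 4 + 36 * k ^ 2 - 14) + n * (-162 * k ^ 3 + 243 * k ^ 2 - 198 * k - 180)
    + n * (n - 1) / 2 * (324 * k ^ 2 - 648 * k - 405)
    + n * (n - 1) * (n - 2) / 6 * (-243 * (2 * k + 1))

lemma cfV_rec (k x y : ℝ) (n : ℕ) : cfV k x y (n + 2) =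
    (2 * (n : ℝ) + 3) * (9 * ((n : ℝ) + 1) * ((n : ℝ) + 2) + 4 + 18 * k ^ 2) * cfV k x y (n + 1)
      + (-(9 * ((n : ℝ) + 1) ^ 4 * (9 * ((n : ℝ) + 1) ^ 2 - 1))) * cfV k x y n := by
  rw [cfV]

/-- Contiguous relation in the parameter. -/
lemma cfV_contig (k x y x' y' l : ℝ)
    (h0 : l * x' = cfAlpha k 0 * x + 9 / 2 * (2 * k + 1) * y)
    (h1 : l * y' = 9 / 2 * (2 * k + 1) * (-72) * x
      + (cfAlpha k 1 + 9 / 2 * (2 * k + 1) * (3 * (22 + 18 * k ^ 2))) * y) (n : ℕ) :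
    l * cfV (k + 1) x' y' n = cfAlpha k n * cfV k x y n + 9 / 2 * (2 * k + 1) * cfV k x y (n + 1) ∧
    l * cfV (k + 1) x' y' (n + 1) =
      cfAlpha k (n + 1) * cfV k x y (n + 1) + 9 / 2 * (2 * k + 1) * cfV k x y (n + 2) := by
  induction n with
  | zero =>
    constructor
    · simpa [cfV] using h0
    · rw [cfV_rec]
      simp only [cfV, cfAlpha] at *
      push_cast
      linear_combination h1
  | succ n ih =>
    obtain ⟨i0, i1⟩ := ih
    constructor
    · push_cast
      exact i1
    · rw [cfV_rec (k + 1), cfV_rec k x y (n + 1)]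
      rw [cfV_rec k x y n] at *
      push_cast
      simp only [cfAlpha] at *
      linear_combination ((2 * (n : ℝ) + 3) * (9 * ((n : ℝ) + 1) * ((n : ℝ) + 2) + 4 + 18 * (k + 1) ^ 2)) * i1 + (-(9 * ((n : ℝ) + 1) ^ 4 * (9 * ((n : ℝ) + 1) ^ 2 - 1))) * i0

def cfL (k : ℕ) : ℝ := (3 * (k : ℝ) + 1) ^ 2 * (3 * (k : ℝ) + 2) ^ 2

lemma cfL_pos (k : ℕ) : 0 < cfL k := by unfold cfL; positivity

lemma cfQ_contig (k n : ℕ) :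
    cfL k * cfQ (k + 1) n = cfAlpha k n * cfQ k n + 9 / 2 * (2 * k + 1) * cfQ k (n + 1) := by
  unfold cfQ
  push_cast
  refine (cfV_contig _ _ _ _ _ _ ?_ ?_ n).1 <;> simp only [cfL, cfAlpha] <;> ring

lemma cfS_diff (k : ℕ) : cfL k * (cfS (k + 1) - cfS k) = 3 * (2 * k + 1) := by
  simp only [cfS, cfL]
  have h1 : (3 * (k : ℝ) + 1) ≠ 0 := by positivity
  have h2 : (3 * (k : ℝ) + 2) ≠ 0 := by positivity
  field_simp
  ring

lemma cfA_contig (k n : ℕ) :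
    cfL k * cfA (k + 1) n = cfAlpha k n * cfA k n + 9 / 2 * (2 * k + 1) * cfA k (n + 1) := by
  have h := cfS_diff k
  unfold cfA
  push_cast
  refine (cfV_contig _ _ _ _ _ _ ?_ ?_ n).1 <;> simp only [cfL, cfAlpha] at *
  · linear_combination h
  · linear_combination (4 + 18 * ((k : ℝ) + 1) ^ 2) * h

def cfW : ℕ → ℝ
  | 0 => 2 / 3
  | n + 1 => (9 * ((n : ℝ) + 1) ^ 4 * (9 * ((n : ℝ) + 1) ^ 2 - 1)) * cfW n

lemma cfW_eq (k n : ℕ) : cfA k (n + 1) * cfQ k n - cfA k n * cfQ k (n + 1) = cfW n := by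
  induction n with
  | zero => simp only [cfA, cfQ, cfV, cfW]; ring
  | succ n ih =>
    rw [cfW, ← ih]
    unfold cfA cfQ
    rw [cfV_rec, cfV_rec]
    ring

def cfB (n : ℕ) : ℝ := 9 ^ n * (n.factorial : ℝ) ^ 3

lemma cfB_pos (n : ℕ) : 0 < cfB n := by unfold cfB; positivity

lemma cfB_succ (n : ℕ) : cfB (n + 1) = 9 * ((n : ℝ) + 1) ^ 3 * cfB n := by
  unfold cfB
  rw [Nat.factorial_succ]
  push_cast
  ring

lemma cfW_bound (n : ℕ) : 0 ≤ cfW n ∧ cfW n ≤ 2 / 3 * cfB n ^ 2 := by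
  induction n with
  | zero => norm_num [cfW, cfB]
  | succ n ih =>
    rw [cfW, cfB_succ]
    have hn : (0 : ℝ) ≤ n := by positivity
    have h : 0 ≤ 9 * ((n : ℝ) + 1) ^ 4 * (9 * ((n : ℝ) + 1) ^ 2 - 1) := by
      apply mul_nonneg (by positivity); nlinarith
    refine ⟨mul_nonneg h ih.1, ?_⟩
    calc _ ≤ (9 * ((n : ℝ) + 1) ^ 4 * (9 * ((n : ℝ) + 1) ^ 2)) * (2 / 3 * cfB n ^ 2) := by
          apply mul_le_mul _ ih.2 ih.1 (by positivity)
          apply mul_le_mul_of_nonneg_left _ (by positivity)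
          linarith
      _ = _ := by ring

lemma cfQ_step (k : ℕ) (hk : 1 ≤ k) (n : ℕ) :
    0 < cfQ k n ∧ 9 * ((n : ℝ) + 1) ^ 2 * ((n : ℝ) + 2) * cfQ k n ≤ cfQ k (n + 1) := by
  have hk' : (1 : ℝ) ≤ k := by exact_mod_cast hk
  have hk2 : (1 : ℝ) ≤ (k : ℝ) ^ 2 := by nlinarith
  induction n with
  | zero =>
    simp only [cfQ, cfV]
    constructor
    · norm_num
    · push_cast; linarith
  | succ n ih =>
    obtain ⟨i0, i1⟩ := ih
    have hn : (0 : ℝ) ≤ n := by positivity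
    have hpos : 0 < cfQ k (n + 1) := lt_of_lt_of_le (by positivity) i1
    refine ⟨hpos, ?_⟩
    have hrec : cfQ k (n + 1 + 1) = _ := cfV_rec k 1 (4 + 18 * (k : ℝ) ^ 2) n
    change cfQ k (n + 1 + 1) = (2 * (n : ℝ) + 3) * (9 * ((n : ℝ) + 1) * ((n : ℝ) + 2) + 4 + 18 * (k : ℝ) ^ 2) * cfQ k (n + 1)
      + (-(9 * ((n : ℝ) + 1) ^ 4 * (9 * ((n : ℝ) + 1) ^ 2 - 1))) * cfQ k n at hrec
    rw [hrec]
    push_cast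
    have hb : 0 ≤ ((n : ℝ) + 1) ^ 2 * (9 * ((n : ℝ) + 1) ^ 2 - 1) := by
      apply mul_nonneg (by positivity); nlinarith
    have e1 := mul_le_mul_of_nonneg_left i1 hb
    have hn2 : (0 : ℝ) < (n : ℝ) + 2 := by positivity
    have e2 : 0 ≤ (2 * (n : ℝ) + 3) * (18 * ((k : ℝ) ^ 2 - 1)) * ((n : ℝ) + 2) * cfQ k (n + 1) := by
      have : 0 ≤ (k : ℝ) ^ 2 - 1 := by linarith
      positivity
    have e3 : 0 ≤ (12 * (n : ℝ) + 16) * cfQ k (n + 1) := by positivity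
    rw [← sub_nonneg]
    refine nonneg_of_mul_nonneg_right (a := (n : ℝ) + 2) ?_ hn2
    linarith [e1, e2, e3]

lemma cfQ_lower (k : ℕ) (hk : 1 ≤ k) (n : ℕ) : cfB n * ((n : ℝ) + 1) ≤ cfQ k n := by
  induction n with
  | zero => simp [cfB, cfQ, cfV]
  | succ n ih =>
    refine le_trans ?_ (cfQ_step k hk n).2
    rw [cfB_succ]
    push_cast
    have := mul_le_mul_of_nonneg_left ih (show 0 ≤ 9 * ((n : ℝ) + 1) ^ 2 * ((n : ℝ) + 2) by positivity)
    linarith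

lemma cfQ_ge_k (k : ℕ) (hk : 1 ≤ k) (n : ℕ) : (k : ℝ) ≤ cfQ k (n + 1) := by
  induction n with
  | zero =>
    simp only [cfQ, cfV]
    nlinarith [sq_nonneg ((k : ℝ) - 1)]
  | succ n ih =>
    have h := cfQ_step k hk (n + 1)
    refine ih.trans (le_trans ?_ h.2)
    have hc : (1 : ℝ) ≤ 9 * (((n + 1 : ℕ) : ℝ) + 1) ^ 2 * (((n + 1 : ℕ) : ℝ) + 2) := by
      have : (0 : ℝ) ≤ ((n + 1 : ℕ) : ℝ) := by positivity
      nlinarith [pow_nonneg this 3, pow_nonneg this 2]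
    nlinarith [h.1]

lemma cfQ_ge_one (k : ℕ) (hk : 1 ≤ k) (n : ℕ) : 1 ≤ cfQ k n := by
  cases n with
  | zero => simp [cfQ, cfV]
  | succ n => exact le_trans (by exact_mod_cast hk) (cfQ_ge_k k hk n)

lemma cf_diff (k : ℕ) (hk : 1 ≤ k) (n : ℕ) :
    0 ≤ cfA (k + 1) n / cfQ (k + 1) n - cfA k n / cfQ k n ∧
    cfA (k + 1) n / cfQ (k + 1) n - cfA k n / cfQ k n ≤ (cfS (k + 1) - cfS k) / ((n : ℝ) + 1) ^ 2 := by
  have q0 := (cfQ_step k hk n).1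
  have q1 := (cfQ_step (k + 1) (by omega) n).1
  have hL := cfL_pos k
  have key : cfA (k + 1) n / cfQ (k + 1) n - cfA k n / cfQ k n =
      (9 / 2 * (2 * k + 1) * cfW n) / (cfL k * (cfQ (k + 1) n * cfQ k n)) := by
    rw [div_sub_div _ _ q1.ne' q0.ne', div_eq_div_iff (by positivity) (by positivity)]
    linear_combination (cfQ (k + 1) n * cfQ k n) * (cfQ k n * cfA_contig k n - cfA k n * cfQ_contig k n + 9 / 2 * (2 * k + 1) * cfW_eq k n)
  have hS : cfS (k + 1) - cfS k = 3 * (2 * k + 1) / cfL k := by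
    rw [eq_div_iff hL.ne', mul_comm]; exact cfS_diff k
  have hW := cfW_bound n
  rw [key, hS]
  refine ⟨div_nonneg (mul_nonneg (by positivity) hW.1) (by positivity), ?_⟩
  rw [div_div, div_le_div_iff₀ (by positivity) (by positivity)]
  have hB := cfB_pos n
  have hQQ : (cfB n * ((n : ℝ) + 1)) * (cfB n * ((n : ℝ) + 1)) ≤ cfQ (k + 1) n * cfQ k n :=
    mul_le_mul (cfQ_lower _ (by omega) n) (cfQ_lower _ hk n) (by positivity) q1.le
  have e1 := mul_le_mul_of_nonneg_left hW.2 (show 0 ≤ 9 / 2 * (2 * (k : ℝ) + 1) * (cfL k * ((n : ℝ) + 1) ^ 2) by positivity)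
  have e2 := mul_le_mul_of_nonneg_left hQQ (show 0 ≤ 3 * (2 * (k : ℝ) + 1) * cfL k by positivity)
  linarith

lemma cf_tail (n m : ℕ) :
    cfA 1 n / cfQ 1 n ≤ cfA (m + 1) n / cfQ (m + 1) n ∧
    cfA (m + 1) n / cfQ (m + 1) n - cfA 1 n / cfQ 1 n ≤ (cfS (m + 1) - cfS 1) / ((n : ℝ) + 1) ^ 2 := by
  induction m with
  | zero => simp
  | succ m ih =>
    have h := cf_diff (m + 1) (by omega) n
    refine ⟨by linarith, ?_⟩
    have : (cfS (m + 1 + 1) - cfS 1) / ((n : ℝ) + 1) ^ 2 = (cfS (m + 1 + 1) - cfS (m + 1)) / ((n : ℝ) + 1) ^ 2 + (cfS (m + 1) - cfS 1) / ((n : ℝ) + 1) ^ 2 := by ring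
    linarith

lemma cf_fixed (n : ℕ) :
    Tendsto (fun m : ℕ => cfA (m + 1) n / cfQ (m + 1) n - cfS (m + 1)) atTop (𝓝 0) := by
  induction n with
  | zero => simp [cfA, cfQ, cfV]
  | succ n ih =>
    have h : Tendsto (fun m : ℕ => cfA (m + 1) (n + 1) / cfQ (m + 1) (n + 1) - cfA (m + 1) n / cfQ (m + 1) n) atTop (𝓝 0) := by
      have hlim : Tendsto (fun m : ℕ => cfW n * (1 / ((m : ℝ) + 1))) atTop (𝓝 0) := by
        simpa using (tendsto_one_div_add_atTop_nhds_zero_nat (𝕜 := ℝ)).const_mul (cfW n)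
      have key : ∀ m : ℕ, cfA (m + 1) (n + 1) / cfQ (m + 1) (n + 1) - cfA (m + 1) n / cfQ (m + 1) n = cfW n * (1 / (cfQ (m + 1) (n + 1) * cfQ (m + 1) n)) := by
        intro m
        have q0 := (cfQ_step (m + 1) (by omega) n).1
        have q1 := (cfQ_step (m + 1) (by omega) (n + 1)).1
        rw [div_sub_div _ _ q1.ne' q0.ne', ← cfW_eq (m + 1) n]
        ring
      refine squeeze_zero ?_ ?_ hlim
      · intro m
        have q0 := (cfQ_step (m + 1) (by omega) n).1
        have q1 := (cfQ_step (m + 1) (by omega) (n + 1)).1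
        rw [key]
        exact mul_nonneg (cfW_bound n).1 (by positivity)
      · intro m
        rw [key]
        refine mul_le_mul_of_nonneg_left ?_ (cfW_bound n).1
        apply one_div_le_one_div_of_le (by positivity)
        have h1 := cfQ_ge_k (m + 1) (by omega) n
        have h2 := cfQ_ge_one (m + 1) (by omega) n
        push_cast at h1
        have : (0 : ℝ) ≤ m := by positivity
        nlinarith
    have := h.add ih
    simpa using this

def cfChi (n : ℕ) : ℝ := (if (n + 1) % 3 = 1 then (1 : ℝ) else if (n + 1) % 3 = 2 then -1 else 0) / ((n : ℝ) + 1) ^ 2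

lemma cfChi_summable : Summable cfChi := by
  have h : Summable (fun n : ℕ => 1 / (((n + 1 : ℕ) : ℝ)) ^ 2) :=
    (summable_nat_add_iff 1).2 (Real.summable_one_div_nat_pow.2 (by norm_num : 1 < 2))
  refine Summable.of_norm_bounded h ?_
  intro n
  unfold cfChi
  rw [norm_div, norm_pow]
  push_cast
  have : ‖((n : ℝ) + 1)‖ = (n : ℝ) + 1 := by rw [Real.norm_eq_abs, abs_of_pos (by positivity)]
  rw [this]
  gcongr
  split_ifs <;> simp

lemma cfS_eq (k : ℕ) : ∑ i ∈ Finset.range (k * 3), cfChi i = cfS k := by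
  induction k with
  | zero => simp [cfS]
  | succ k ih =>
    rw [Nat.succ_mul, Finset.sum_range_succ, Finset.sum_range_succ, Finset.sum_range_succ, ih, cfS]
    have h0 : cfChi (k * 3) = 1 / (3 * (k : ℝ) + 1) ^ 2 := by
      unfold cfChi
      rw [if_pos (by omega)]
      push_cast
      ring
    have h1 : cfChi (k * 3 + 1) = - (1 / (3 * (k : ℝ) + 2) ^ 2) := by
      unfold cfChi
      rw [if_neg (by omega), if_pos (by omega)]
      push_cast
      ring
    have h2 : cfChi (k * 3 + 2) = 0 := by
      unfold cfChi
      rw [if_neg (by omega), if_neg (by omega), zero_div]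
    rw [h0, h1, h2]
    ring

lemma cfS_tendsto : Tendsto (fun m => cfS (m + 1)) atTop (𝓝 (∑' n, cfChi n)) := by
  have h := cfChi_summable.hasSum.tendsto_sum_nat
  have h3 : Tendsto (fun m : ℕ => (m + 1) * 3) atTop atTop :=
    tendsto_atTop_mono (fun m => by simp only [id]; omega) tendsto_id
  exact (h.comp h3).congr (fun m => cfS_eq (m + 1))

lemma cf_main : Tendsto (fun n => cfA 1 n / cfQ 1 n) atTop (𝓝 (∑' n, cfChi n)) := by
  set G := ∑' n, cfChi n with hG
  have hf : ∀ n, Tendsto (fun m : ℕ => cfA (m + 1) n / cfQ (m + 1) n) atTop (𝓝 G) := by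
    intro n
    simpa using (cf_fixed n).add cfS_tendsto
  have h1 : ∀ n, cfA 1 n / cfQ 1 n ≤ G := fun n =>
    ge_of_tendsto' (hf n) (fun m => (cf_tail n m).1)
  have h2 : ∀ n : ℕ, G - cfA 1 n / cfQ 1 n ≤ (G - cfS 1) / ((n : ℝ) + 1) ^ 2 := fun n =>
    le_of_tendsto_of_tendsto' ((hf n).sub_const _) ((cfS_tendsto.sub_const _).div_const _)
      (fun m => (cf_tail n m).2)
  have hl : Tendsto (fun n : ℕ => (G - cfS 1) / ((n : ℝ) + 1) ^ 2) atTop (𝓝 0) := by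
    have h := ((tendsto_one_div_add_atTop_nhds_zero_nat (𝕜 := ℝ)).pow 2).const_mul (G - cfS 1)
    simp only [ne_eq, OfNat.ofNat_ne_zero, not_false_eq_true, zero_pow, mul_zero] at h
    refine h.congr (fun n => ?_)
    rw [one_div, inv_pow, div_eq_mul_inv]
  have h3 : Tendsto (fun n => G - cfA 1 n / cfQ 1 n) atTop (𝓝 0) :=
    squeeze_zero (fun n => sub_nonneg.2 (h1 n)) h2 hl
  simpa using h3.const_sub G

end

theorem stmt_13 
    (a b p q : ℕ → ℝ)
    (ha0 : a 0 = 3 / 4)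
    (ha : ∀ n : ℕ, 1 ≤ n → a n = (2 * (n : ℝ) - 1) * (9 * (n : ℝ) ^ 2 - 9 * (n : ℝ) + 22))
    (hb0 : b 0 = 2 / 3)
    (hb : ∀ n : ℕ, 1 ≤ n → b n = -(9 * (n : ℝ) ^ 4 * (9 * (n : ℝ) ^ 2 - 1)))
    (hp0 : p 0 = a 0) (hq0 : q 0 = 1)
    (hp1 : p 1 = a 0 * a 1 + b 0) (hq1 : q 1 = a 1)
    (hp : ∀ n : ℕ, p (n + 2) = a (n + 2) * p (n + 1) + b (n + 1) * p n)
    (hq : ∀ n : ℕ, q (n + 2) = a (n + 2) * q (n + 1) + b (n + 1) * q n) :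
    Tendsto (fun n => p n / q n) atTop (𝓝 (∑' n : ℕ, (if (n + 1) % 3 = 1 then (1 : ℝ) else if (n + 1) % 3 = 2 then -1 else 0) / ((n : ℝ) + 1) ^ 2)) := by
  have ha1 : a 1 = 22 := by rw [ha 1 le_rfl]; norm_num
  have hP : ∀ n, p n = cfA 1 n ∧ p (n + 1) = cfA 1 (n + 1) := by
    intro n
    induction n with
    | zero =>
      rw [hp0, hp1, ha1, ha0, hb0]
      norm_num [cfA, cfV, cfS]
    | succ n ih =>
      refine ⟨ih.2, ?_⟩
      rw [hp, ih.1, ih.2, ha _ (by omega), hb _ (by omega)]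
      unfold cfA
      rw [cfV_rec]
      push_cast
      ring
  have hQ : ∀ n, q n = cfQ 1 n ∧ q (n + 1) = cfQ 1 (n + 1) := by
    intro n
    induction n with
    | zero =>
      rw [hq0, hq1, ha1]
      norm_num [cfQ, cfV]
    | succ n ih =>
      refine ⟨ih.2, ?_⟩
      rw [hq, ih.1, ih.2, ha _ (by omega), hb _ (by omega)]
      unfold cfQ
      rw [cfV_rec]
      push_cast
      ring
  have h := cf_main
  refine h.congr (fun n => ?_)
  rw [(hP n).1, (hQ n).1]
end

section
/- Define a(0) = 0 and a(n) = 3(2n−1)(3n² − 3n + 1)(15n² − 15n + 4) for n ≥ 1, and b(0) = 13 and b(n) = 3n⁸(9n² − 1) for n ≥ 1. Then the convergents p(n)/q(n) of the continued fraction with partial quotients (a(n), b(n)) converge to ζ(4) = π⁴/90 as n → ∞. (This continued fraction was discovered by G. Rhin and the author in 1980.) -/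
open Filter Topology

noncomputable section

def zfSig (n t : ℝ) : ℝ :=
    ((-8) * n ^ 2 + (-56) * n ^ 3 + (-98) * n ^ 4 + (212) * n ^ 5 + (1028) * n ^ 6 + (1975/2) * n ^ 7 + (-2923/2) * n ^ 8 + (-7531/2) * n ^ 9 + (-4549/2) * n ^ 10) +
    ((-8) * n + (-64) * n ^ 2 + (-94) * n ^ 3 + (568) * n ^ 4 + (2468) * n ^ 5 + (2178) * n ^ 6 + (-5775) * n ^ 7 + (-13764) * n ^ 8 + (-8249) * n ^ 9) * t +
    ((-2) + (-22) * n + (-13/2) * n ^ 2 + (581) * n ^ 3 + (2461) * n ^ 4 + (2935/2) * n ^ 5 + (-10370) * n ^ 6 + (-21301) * n ^ 7 + (-11387) * n ^ 8) * t ^ 2 +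
    ((-2) + (15) * n + (289) * n ^ 2 + (1340) * n ^ 3 + (-329) * n ^ 4 + (-10901) * n ^ 5 + (-17354) * n ^ 6 + (-5906) * n ^ 7) * t ^ 3 +
    ((7/2) + (71) * n + (439) * n ^ 2 + (-2207/2) * n ^ 3 + (-14109/2) * n ^ 4 + (-6891) * n ^ 5 + (3965/2) * n ^ 6) * t ^ 4 +
    ((7) + (86) * n + (-734) * n ^ 2 + (-2645) * n ^ 3 + (-43) * n ^ 4 + (4333) * n ^ 5) * t ^ 5 +
    ((8) + (-459/2) * n + (-859/2) * n ^ 2 + (1168) * n ^ 3 + (2398) * n ^ 4) * t ^ 6 +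
    ((-29) + (30) * n + (453) * n ^ 2 + (610) * n ^ 3) * t ^ 7 +
    ((29/2) + (115/2) * n + (61) * n ^ 2) * t ^ 8

def zfSigR (n u : ℝ) : ℝ :=
    ((-8) * n ^ 2 + (-56) * n ^ 3 + (-98) * n ^ 4 + (212) * n ^ 5 + (1028) * n ^ 6 + (1975/2) * n ^ 7 + (-2923/2) * n ^ 8 + (-7531/2) * n ^ 9 + (-4549/2) * n ^ 10) * u ^ 8 +
    ((-8) * n + (-64) * n ^ 2 + (-94) * n ^ 3 + (568) * n ^ 4 + (2468) * n ^ 5 + (2178) * n ^ 6 + (-5775) * n ^ 7 + (-13764) * n ^ 8 + (-8249) * n ^ 9) * u ^ 7 +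
    ((-2) + (-22) * n + (-13/2) * n ^ 2 + (581) * n ^ 3 + (2461) * n ^ 4 + (2935/2) * n ^ 5 + (-10370) * n ^ 6 + (-21301) * n ^ 7 + (-11387) * n ^ 8) * u ^ 6 +
    ((-2) + (15) * n + (289) * n ^ 2 + (1340) * n ^ 3 + (-329) * n ^ 4 + (-10901) * n ^ 5 + (-17354) * n ^ 6 + (-5906) * n ^ 7) * u ^ 5 +
    ((7/2) + (71) * n + (439) * n ^ 2 + (-2207/2) * n ^ 3 + (-14109/2) * n ^ 4 + (-6891) * n ^ 5 + (3965/2) * n ^ 6) * u ^ 4 +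
    ((7) + (86) * n + (-734) * n ^ 2 + (-2645) * n ^ 3 + (-43) * n ^ 4 + (4333) * n ^ 5) * u ^ 3 +
    ((8) + (-459/2) * n + (-859/2) * n ^ 2 + (1168) * n ^ 3 + (2398) * n ^ 4) * u ^ 2 +
    ((-29) + (30) * n + (453) * n ^ 2 + (610) * n ^ 3) * u ^ 1 +
    ((29/2) + (115/2) * n + (61) * n ^ 2)

def zfA (n : ℕ) (t : ℝ) : ℝ := ∏ j ∈ Finset.range n, (t - 1 - (j : ℝ))

def zfB (n : ℕ) (t : ℝ) : ℝ := ∏ j ∈ Finset.range n, (t + (j : ℝ))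

/-- The well-poised rational function. -/
def zfR (n : ℕ) (t : ℝ) : ℝ :=
  (-1) ^ n * (t + n / 2) * zfA n t ^ 2 * zfB (2 * n + 1) t ^ 2 / zfB (n + 1) t ^ 6

/-- The creative telescoping certificate, for the index `m + 1`. -/
def zfS (m : ℕ) (t : ℝ) : ℝ :=
  (-1) ^ m * zfSig (m + 1) t * zfA (m + 1) t ^ 2 * zfB (2 * m + 1) t ^ 2 / zfB (m + 2) t ^ 6

lemma zfA_succ (n : ℕ) (t : ℝ) : zfA (n + 1) t = zfA n t * (t - 1 - n) := by
  simp [zfA, Finset.prod_range_succ]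

lemma zfB_succ (n : ℕ) (t : ℝ) : zfB (n + 1) t = zfB n t * (t + n) := by
  simp [zfB, Finset.prod_range_succ]

lemma zfA_shift (n : ℕ) (t : ℝ) : zfA (n + 1) (t + 1) = t * zfA n t := by
  simp only [zfA, Finset.prod_range_succ']
  rw [mul_comm]
  congr 1
  · simp
  · apply Finset.prod_congr rfl
    intros; push_cast; ring

lemma zfB_shift (n : ℕ) (t : ℝ) : zfB (n + 1) t = t * zfB n (t + 1) := by
  simp only [zfB, Finset.prod_range_succ']
  rw [mul_comm]
  congr 1
  · simp
  · apply Finset.prod_congr rfl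
    intros; push_cast; ring

lemma zfB_pos (n : ℕ) {t : ℝ} (ht : 0 < t) : 0 < zfB n t :=
  Finset.prod_pos fun _ _ => by positivity

lemma zfA_diff (n : ℕ) : Differentiable ℝ (zfA n) := by
  unfold zfA; fun_prop

lemma zfB_diff (n : ℕ) : Differentiable ℝ (zfB n) := by
  unfold zfB; fun_prop

lemma zfR_diff (n : ℕ) {t : ℝ} (ht : 0 < t) : DifferentiableAt ℝ (zfR n) t := by
  have h := (zfB_pos (n + 1) ht).ne'
  have h1 := (zfA_diff n) t
  have h2 := (zfB_diff (2 * n + 1)) t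
  have h3 := (zfB_diff (n + 1)) t
  unfold zfR
  apply DifferentiableAt.fun_div
  · fun_prop
  · fun_prop
  · positivity

lemma zfSig_diff (n : ℝ) : Differentiable ℝ (zfSig n) := by
  unfold zfSig; fun_prop

lemma zfS_diff (n : ℕ) {t : ℝ} (ht : 0 < t) : DifferentiableAt ℝ (zfS n) t := by
  have h := (zfB_pos (n + 2) ht).ne'
  have h1 := (zfA_diff (n + 1)) t
  have h2 := (zfB_diff (2 * n + 1)) t
  have h3 := (zfB_diff (n + 2)) t
  have h4 := (zfSig_diff (n + 1)) t
  unfold zfS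
  apply DifferentiableAt.fun_div
  · fun_prop
  · fun_prop
  · positivity

set_option maxHeartbeats 4000000 in
lemma zf_cert_poly (m t : ℝ) :
    (m + 2) ^ 5 * ((t + (m + 2) / 2) * ((t - 1 - m) * (t - 1 - (m + 1))) ^ 2 *
        ((t + (2 * m + 1)) * (t + (2 * m + 2)) * (t + (2 * m + 3)) * (t + (2 * m + 4))) ^ 2)
      + 3 * (2 * (m + 1) + 1) * (3 * (m + 1) ^ 2 + 3 * (m + 1) + 1) *
          (15 * (m + 1) ^ 2 + 15 * (m + 1) + 4) *
        ((t + (m + 1) / 2) * (t - 1 - m) ^ 2 * ((t + (2 * m + 1)) * (t + (2 * m + 2))) ^ 2 *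
          (t + (m + 2)) ^ 6)
      - 3 * (m + 1) ^ 3 * (9 * (m + 1) ^ 2 - 1) *
        ((t + m / 2) * ((t + (m + 1)) * (t + (m + 2))) ^ 6)
      = zfSig (m + 1) (t + 1) * (t + (2 * m + 1)) ^ 2 * t ^ 6
        - zfSig (m + 1) t * (t - 1 - m) ^ 2 * (t + (m + 2)) ^ 6 := by
  unfold zfSig
  ring

lemma zf_cert (m : ℕ) {t : ℝ} (ht : 0 < t) :
    ((m : ℝ) + 2) ^ 5 * zfR (m + 2) t
      - 3 * (2 * ((m : ℝ) + 1) + 1) * (3 * ((m : ℝ) + 1) ^ 2 + 3 * (m + 1) + 1) *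
          (15 * ((m : ℝ) + 1) ^ 2 + 15 * (m + 1) + 4) * zfR (m + 1) t
      - 3 * ((m : ℝ) + 1) ^ 3 * (9 * ((m : ℝ) + 1) ^ 2 - 1) * zfR m t
      = zfS m (t + 1) - zfS m t := by
  have hZ := (zfB_pos (m + 1) ht).ne'
  have hY1 : zfB (2 * m + 1) (t + 1) = zfB (2 * m + 1) t * (t + (2 * m + 1)) / t := by
    rw [eq_div_iff ht.ne', mul_comm, ← zfB_shift, zfB_succ]; push_cast; ring
  have hZ1 : zfB (m + 2) (t + 1) = zfB (m + 1) t * (t + (m + 1)) * (t + (m + 2)) / t := by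
    rw [eq_div_iff ht.ne', mul_comm, ← zfB_shift, zfB_succ, zfB_succ]; push_cast; ring
  have hZ2 : zfB (m + 2) t = zfB (m + 1) t * (t + (m + 1)) := by
    rw [zfB_succ]; push_cast; ring
  have hZ3 : zfB (m + 3) t = zfB (m + 1) t * (t + (m + 1)) * (t + (m + 2)) := by
    rw [zfB_succ, zfB_succ]; push_cast; ring
  have hY3 : zfB (2 * m + 3) t = zfB (2 * m + 1) t * (t + (2 * m + 1)) * (t + (2 * m + 2)) := by
    rw [zfB_succ, zfB_succ]; push_cast; ring
  have hY5 : zfB (2 * m + 5) t = zfB (2 * m + 1) t * (t + (2 * m + 1)) * (t + (2 * m + 2))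
      * (t + (2 * m + 3)) * (t + (2 * m + 4)) := by
    rw [zfB_succ, zfB_succ, hY3]; push_cast; ring
  have hA2 : zfA (m + 2) t = zfA m t * (t - 1 - m) * (t - 1 - (m + 1)) := by
    rw [zfA_succ, zfA_succ]; push_cast; ring
  unfold zfR zfS
  rw [show 2 * (m + 2) + 1 = 2 * m + 5 by ring, show 2 * (m + 1) + 1 = 2 * m + 3 by ring,
    show m + 2 + 1 = m + 3 by ring, show m + 1 + 1 = m + 2 by ring, hY5, hY3, hZ3, hZ2, hZ1, hY1,
    hA2, zfA_shift, zfA_succ]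
  have key := zf_cert_poly m t
  have e1 : t + ((m : ℝ) + 1) ≠ 0 := by positivity
  have e2 : t + ((m : ℝ) + 2) ≠ 0 := by positivity
  generalize zfB (m + 1) t = Z at *
  generalize zfB (2 * m + 1) t = Y at *
  generalize zfA m t = X at *
  generalize zfSig (m + 1) t = s0 at *
  generalize zfSig (m + 1) (t + 1) = s1 at *
  have key2 := congrArg (fun z => z * ((-1) ^ m * X ^ 2 * Y ^ 2 /
    (Z * (t + (m + 1)) * (t + (m + 2))) ^ 6)) key
  push_cast
  refine Eq.trans (Eq.trans ?_ key2) ?_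
  · rw [pow_add, pow_add]
    field_simp
    ring
  · field_simp

lemma zf_deriv_tendsto {S F : ℝ → ℝ} (hF : ContDiffAt ℝ 1 F 0)
    (h : ∀ t, 0 < t → S t = F t⁻¹) : Tendsto (deriv S) atTop (𝓝 0) := by
  have hc : ContinuousAt (deriv F) 0 := by
    have := (hF.fderiv_right (m := 0) (by norm_num)).continuousAt
    exact (this.clm_apply (continuousAt_const (y := (1 : ℝ))))
  have hd : ∀ᶠ u in 𝓝 (0 : ℝ), DifferentiableAt ℝ F u := by
    filter_upwards [hF.eventually (by simp)] with u hu
    exact hu.differentiableAt (by simp)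
  have hinv : Tendsto (fun t : ℝ => t⁻¹) atTop (𝓝 0) := tendsto_inv_atTop_zero
  have h1 : Tendsto (fun t : ℝ => deriv F t⁻¹ * (-(t ^ 2)⁻¹)) atTop (𝓝 0) := by
    have h2 : Tendsto (fun t : ℝ => -(t ^ 2)⁻¹) atTop (𝓝 0) := by
      have := (hinv.pow 2).neg
      simpa [inv_pow] using this
    have := (hc.tendsto.comp hinv).mul h2
    simpa using this
  refine h1.congr' ?_
  filter_upwards [hinv.eventually hd, eventually_gt_atTop 0] with t ht ht0
  symm
  have : S =ᶠ[𝓝 t] fun s => F s⁻¹ := by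
    filter_upwards [eventually_gt_nhds ht0] with s hs using h s hs
  rw [this.deriv_eq]
  exact (ht.hasDerivAt.comp t (hasDerivAt_inv ht0.ne')).deriv

lemma zf_tele {S : ℝ → ℝ} {f : ℝ → ℝ} (hS : Tendsto (deriv S) atTop (𝓝 0))
    (hSd : ∀ t, 0 < t → DifferentiableAt ℝ S t)
    (hf : ∀ t, 0 < t → f t = S (t + 1) - S t)
    (hsum : Summable fun k : ℕ => deriv f (k + 1)) :
    ∑' k : ℕ, deriv f ((k : ℝ) + 1) = - deriv S 1 := by
  have hd : ∀ k : ℕ, deriv f ((k : ℝ) + 1) = deriv S (((k + 1 : ℕ) : ℝ) + 1) - deriv S (k + 1) := by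
    intro k
    have hk : (0 : ℝ) < k + 1 := by positivity
    have : f =ᶠ[𝓝 ((k : ℝ) + 1)] fun s => S (s + 1) - S s := by
      filter_upwards [eventually_gt_nhds hk] with s hs using hf s hs
    rw [this.deriv_eq, deriv_fun_sub, deriv_comp_add_const]
    · push_cast; rfl
    · have := hSd (k + 1 + 1) (by positivity)
      exact DifferentiableAt.comp (g := S) (f := fun s : ℝ => s + 1) _ this (by fun_prop)
    · exact hSd _ hk
  have h1 := hsum.hasSum.tendsto_sum_nat
  refine tendsto_nhds_unique h1 ?_
  simp_rw [hd]
  simp_rw [Finset.sum_range_sub (fun k : ℕ => deriv S ((k : ℝ) + 1))]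
  have h2 : Tendsto (fun n : ℕ => (n : ℝ) + 1) atTop atTop :=
    tendsto_atTop_add_const_right _ _ tendsto_natCast_atTop_atTop
  have := (hS.comp h2).sub_const (deriv S (((0 : ℕ) : ℝ) + 1))
  simpa using this

def zfAr (n : ℕ) (u : ℝ) : ℝ := ∏ j ∈ Finset.range n, (1 - (1 + (j : ℝ)) * u)

def zfBr (n : ℕ) (u : ℝ) : ℝ := ∏ j ∈ Finset.range n, (1 + (j : ℝ) * u)

lemma zfA_eq (n : ℕ) {t : ℝ} (ht : 0 < t) : zfA n t = t ^ n * zfAr n t⁻¹ := by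
  unfold zfA zfAr
  have e : t ^ n = ∏ j ∈ Finset.range n, t := by simp
  rw [e, ← Finset.prod_mul_distrib]
  refine Finset.prod_congr rfl fun j _ => ?_
  field_simp
  ring

lemma zfB_eq (n : ℕ) {t : ℝ} (ht : 0 < t) : zfB n t = t ^ n * zfBr n t⁻¹ := by
  unfold zfB zfBr
  have e : t ^ n = ∏ j ∈ Finset.range n, t := by simp
  rw [e, ← Finset.prod_mul_distrib]
  refine Finset.prod_congr rfl fun j _ => ?_
  field_simp

lemma zfSig_eq (n : ℝ) {t : ℝ} (ht : 0 < t) : zfSig n t = t ^ 8 * zfSigR n t⁻¹ := by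
  unfold zfSig zfSigR
  field_simp

lemma zfS_deriv_tendsto (m : ℕ) : Tendsto (deriv (zfS m)) atTop (𝓝 0) := by
  apply zf_deriv_tendsto (F := fun u => (-1) ^ m * zfSigR (m + 1) u * zfAr (m + 1) u ^ 2 *
    zfBr (2 * m + 1) u ^ 2 / zfBr (m + 2) u ^ 6)
  · have h1 : ContDiffAt ℝ 1 (zfSigR (m + 1)) 0 := by unfold zfSigR; fun_prop
    have h2 : ∀ n, ContDiffAt ℝ 1 (zfAr n) 0 := by
      intro n; unfold zfAr; exact contDiffAt_prod fun _ _ => by fun_prop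
    have h3 : ∀ n, ContDiffAt ℝ 1 (zfBr n) 0 := by
      intro n; unfold zfBr; exact contDiffAt_prod fun _ _ => by fun_prop
    have h4 := h2 (m + 1)
    have h5 := h3 (2 * m + 1)
    have h6 := h3 (m + 2)
    refine ContDiffAt.div ?_ ?_ ?_
    · fun_prop
    · fun_prop
    · simp [zfBr]
  · intro t ht
    unfold zfS
    have hb := zfB_pos (m + 2) ht
    rw [zfB_eq _ ht] at hb
    have hb' : zfBr (m + 2) t⁻¹ ≠ 0 := by
      rintro h; rw [h] at hb; simp at hb
    rw [zfSig_eq _ ht, zfA_eq _ ht, zfB_eq _ ht, zfB_eq _ ht]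
    generalize zfBr (m + 2) t⁻¹ = Z at *
    generalize zfBr (2 * m + 1) t⁻¹ = Y at *
    generalize zfAr (m + 1) t⁻¹ = X at *
    generalize zfSigR (m + 1) t⁻¹ = s at *
    have ht' := ht.ne'
    rw [div_eq_div_iff (by positivity) (by positivity)]
    ring

lemma zf_deriv_sq_mul_zero {f g : ℝ → ℝ} {t : ℝ} (hf : DifferentiableAt ℝ f t)
    (hg : DifferentiableAt ℝ g t) (h0 : f t = 0) : deriv (fun s => f s ^ 2 * g s) t = 0 := by
  have := ((hf.hasDerivAt.fun_pow 2).fun_mul hg.hasDerivAt).deriv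
  rw [this, h0]; simp

lemma zfA_zero (n k : ℕ) (h : k < n) : zfA n ((k : ℝ) + 1) = 0 :=
  Finset.prod_eq_zero (Finset.mem_range.2 h) (by ring)

lemma zfS_deriv_one (m : ℕ) : deriv (zfS m) 1 = 0 := by
  have hb := zfB_pos (m + 2) one_pos
  have h2 := (zfB_diff (2 * m + 1)) 1
  have h3 := (zfB_diff (m + 2)) 1
  have h4 := (zfSig_diff (m + 1)) 1
  have e : zfS m = fun t => zfA (m + 1) t ^ 2 * ((-1) ^ m * zfSig (m + 1) t *
      zfB (2 * m + 1) t ^ 2 / zfB (m + 2) t ^ 6) := by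
    funext t; unfold zfS; ring
  rw [e]
  apply zf_deriv_sq_mul_zero (zfA_diff _ _)
  · apply DifferentiableAt.fun_div
    · fun_prop
    · fun_prop
    · positivity
  · simpa using zfA_zero (m + 1) 0 (by omega)

lemma zfR_deriv_zero (n k : ℕ) (h : k < n) : deriv (zfR n) ((k : ℝ) + 1) = 0 := by
  have hk : (0 : ℝ) < k + 1 := by positivity
  have hb := zfB_pos (n + 1) hk
  have h2 := (zfB_diff (2 * n + 1)) (k + 1)
  have h3 := (zfB_diff (n + 1)) (k + 1)
  have e : zfR n = fun t => zfA n t ^ 2 * ((-1) ^ n * (t + n / 2) *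
      zfB (2 * n + 1) t ^ 2 / zfB (n + 1) t ^ 6) := by
    funext t; unfold zfR; ring
  rw [e]
  apply zf_deriv_sq_mul_zero (zfA_diff _ _)
  · apply DifferentiableAt.fun_div
    · fun_prop
    · fun_prop
    · positivity
  · exact zfA_zero n k h

/-- The factors of the well-poised product. -/
def zfg (n j : ℕ) (t : ℝ) : ℝ :=
  ((t - 1 - j) * (t + n + 1 + j)) / ((t + j) * (t + n - j))

def zfP (n m : ℕ) (t : ℝ) : ℝ := ∏ j ∈ Finset.range m, zfg n j t ^ 2

lemma zfB_add (n m : ℕ) (t : ℝ) :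
    zfB (n + m) t = zfB n t * ∏ j ∈ Finset.range m, (t + n + j) := by
  simp only [zfB, Finset.prod_range_add]
  congr 1
  refine Finset.prod_congr rfl fun j _ => ?_
  push_cast; ring

lemma zfB_reflect (n : ℕ) (t : ℝ) :
    zfB (n + 1) t = t * ∏ j ∈ Finset.range n, (t + n - j) := by
  rw [zfB_shift, zfB, ← Finset.prod_range_reflect]
  congr 1
  refine Finset.prod_congr rfl fun j hj => ?_
  have : j + 1 ≤ n := Finset.mem_range.1 hj
  rw [show n - 1 - j = n - (j + 1) by omega, Nat.cast_sub this]
  push_cast; ring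

lemma zfR_eq (n : ℕ) {t : ℝ} (ht : 0 < t) :
    zfR n t = (-1) ^ n * ((t + n / 2) / (t * (t + n)) ^ 2 * zfP n n t) := by
  have h1 : zfP n n t = (zfA n t * ∏ j ∈ Finset.range n, (t + ((n + 1 : ℕ) : ℝ) + j)) ^ 2 /
      (zfB n t * ∏ j ∈ Finset.range n, (t + n - j)) ^ 2 := by
    simp only [zfP, zfg, zfA, zfB, Finset.prod_pow, Finset.prod_div_distrib,
      Finset.prod_mul_distrib, div_pow]
    push_cast
    simp only [add_assoc]
  have h2 : zfB (2 * n + 1) t =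
      zfB (n + 1) t * ∏ j ∈ Finset.range n, (t + ((n + 1 : ℕ) : ℝ) + j) := by
    rw [← zfB_add]; congr 1; ring
  have h3 := zfB_reflect n t
  have h4 := zfB_succ n t
  have h5 := zfB_pos n ht
  have h6 := zfB_pos (n + 1) ht
  have h7 : ∏ j ∈ Finset.range n, (t + n - j) = zfB n t * (t + n) / t := by
    rw [← h4, h3]; field_simp
  unfold zfR
  rw [h1, h2, h7, h4]
  have h8 : (t + n) ≠ 0 := by positivity
  field_simp

lemma zfg_bound (n j : ℕ) (hj : j < n) {t : ℝ} (ht : (n : ℝ) + 1 ≤ t) :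
    0 ≤ zfg n j t ∧ zfg n j t ≤ 1 ∧ ∃ d, HasDerivAt (zfg n j) d t ∧ |d| ≤ 2 / t := by
  have hj' : (j : ℝ) + 1 ≤ n := by exact_mod_cast hj
  have hj0 : (0 : ℝ) ≤ j := by positivity
  have ht0 : 0 < t := by linarith
  have hden1 : 0 < t + j := by linarith
  have hden2 : 0 < t + n - j := by linarith
  have hx : t * (t + n) ≤ (t + j) * (t + n - j) := by nlinarith
  have hx0 : 0 < t * (t + n) := by apply mul_pos <;> linarith
  have hc : (2 * (j : ℝ) + 1) * (n + 1) ≤ t * (t + n) := by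
    apply le_trans (b := t * (2 * (j : ℝ) + 1))
    · nlinarith
    · apply mul_le_mul_of_nonneg_left _ ht0.le; linarith
  refine ⟨?_, ?_, ?_⟩
  · unfold zfg
    apply div_nonneg
    · apply mul_nonneg <;> linarith
    · positivity
  · unfold zfg
    rw [div_le_one (by positivity)]
    nlinarith
  · have hd : HasDerivAt (zfg n j)
        ((2 * t + n) * ((2 * j + 1) * (n + 1)) / ((t + j) * (t + n - j)) ^ 2) t := by
      have i := hasDerivAt_id t
      have e := (((i.sub_const 1).sub_const (j : ℝ)).mul
        (((i.add_const (n : ℝ)).add_const 1).add_const (j : ℝ))).div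
        ((i.add_const (j : ℝ)).mul ((i.add_const (n : ℝ)).sub_const (j : ℝ)))
        (by simp only [id, Pi.mul_apply]; positivity)
      refine HasDerivAt.congr_deriv e ?_
      simp only [id, Pi.mul_apply]
      congr 1
      ring
    refine ⟨_, hd, ?_⟩
    rw [abs_of_nonneg (by positivity)]
    rw [div_le_div_iff₀ (by positivity) ht0]
    calc (2 * t + n) * ((2 * j + 1) * (n + 1)) * t
        ≤ (2 * t + n) * (t * (t + n)) * t := by gcongr
      _ ≤ 2 * (t * (t + n)) ^ 2 := by
          have : 0 ≤ t * (t + n) * t * n := by positivity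
          nlinarith
      _ ≤ _ := by gcongr

lemma zfP_bound (n m : ℕ) (hm : m ≤ n) {t : ℝ} (ht : (n : ℝ) + 1 ≤ t) :
    0 ≤ zfP n m t ∧ zfP n m t ≤ 1 ∧ ∃ d, HasDerivAt (zfP n m) d t ∧ |d| ≤ 4 * m / t := by
  have ht0 : 0 < t := by have : (0 : ℝ) ≤ n := by positivity
                         linarith
  induction m with
  | zero =>
    refine ⟨by simp [zfP], by simp [zfP], 0, ?_, by simp⟩
    have : zfP n 0 = fun _ => 1 := by funext s; simp [zfP]
    rw [this]; exact hasDerivAt_const _ _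
  | succ m ih =>
    obtain ⟨p0, p1, d, hd, hdb⟩ := ih (by omega)
    obtain ⟨g0, g1, e, he, heb⟩ := zfg_bound n m (by omega) ht
    have hs : zfP n (m + 1) = fun s => zfP n m s * zfg n m s ^ 2 := by
      funext s; simp [zfP, Finset.prod_range_succ]
    rw [hs]
    have gs : zfg n m t ^ 2 ≤ 1 := by nlinarith
    refine ⟨by positivity, ?_, _, hd.fun_mul (he.fun_pow 2), ?_⟩
    · show zfP n m t * zfg n m t ^ 2 ≤ 1
      have : 0 ≤ zfg n m t ^ 2 := by positivity
      nlinarith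
    · have k1 : |d * zfg n m t ^ 2| ≤ 4 * m / t := by
        rw [abs_mul, abs_of_nonneg (by positivity : 0 ≤ zfg n m t ^ 2)]
        calc _ ≤ |d| * 1 := by gcongr
          _ ≤ _ := by linarith
      have k2 : |zfP n m t * (((2 : ℕ) : ℝ) * zfg n m t ^ (2 - 1) * e)| ≤ 4 / t := by
        rw [abs_mul, abs_mul, abs_mul, abs_of_nonneg p0, abs_of_nonneg (by positivity : 0 ≤ zfg n m t ^ (2 - 1))]
        calc zfP n m t * (|((2 : ℕ) : ℝ)| * zfg n m t ^ (2 - 1) * |e|)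
            ≤ 1 * (2 * 1 * (2 / t)) := by
              simp only [Nat.cast_ofNat, abs_two]
              gcongr
              simpa using g1
          _ = _ := by ring
      calc _ ≤ _ := abs_add_le _ _
        _ ≤ 4 * m / t + 4 / t := add_le_add k1 k2
        _ = _ := by push_cast; ring

lemma zfR_bound (n k : ℕ) :
    |deriv (zfR n) ((k : ℝ) + 1)| ≤ (4 * n + 5) * (1 / ((k : ℝ) + 1) ^ 4) := by
  rcases lt_or_ge k n with h | h
  · rw [zfR_deriv_zero n k h]; simp; positivity
  have ht : (n : ℝ) + 1 ≤ k + 1 := by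
    have : (n : ℝ) ≤ k := by exact_mod_cast h
    linarith
  generalize (k : ℝ) + 1 = t at *
  have hn0 : (0 : ℝ) ≤ n := by positivity
  have ht0 : 0 < t := by linarith
  obtain ⟨p0, p1, d, hd, hdb⟩ := zfP_bound n n le_rfl ht
  have hev : zfR n =ᶠ[𝓝 t] fun t => (-1) ^ n * ((t + n / 2) / (t * (t + n)) ^ 2 * zfP n n t) := by
    filter_upwards [eventually_gt_nhds ht0] with s hs using zfR_eq n hs
  have hxp : 0 < t * (t + n) := by positivity
  have hw : HasDerivAt (fun t : ℝ => (t + n / 2) / (t * (t + n)) ^ 2)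
      (1 / (t * (t + n)) ^ 2 - (2 * t + n) ^ 2 / (t * (t + n)) ^ 3) t := by
    have i := hasDerivAt_id t
    have e := (i.add_const ((n : ℝ) / 2)).fun_div ((i.fun_mul (i.add_const (n : ℝ))).fun_pow 2)
      (by simp only [id]; positivity)
    refine HasDerivAt.congr_deriv e ?_
    simp only [id]
    field_simp
    push_cast
    ring
  have hx2 : t ^ 2 ≤ t * (t + n) := by nlinarith
  have hwb : |1 / (t * (t + n)) ^ 2 - (2 * t + n) ^ 2 / (t * (t + n)) ^ 3| ≤ 5 / t ^ 4 := by
    have a1 : 1 / (t * (t + n)) ^ 2 ≤ 1 / t ^ 4 := by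
      apply one_div_le_one_div_of_le (by positivity)
      calc t ^ 4 = (t ^ 2) ^ 2 := by ring
        _ ≤ _ := by gcongr
    have a2 : (2 * t + n) ^ 2 / (t * (t + n)) ^ 3 ≤ 4 / t ^ 4 := by
      rw [div_le_div_iff₀ (by positivity) (by positivity)]
      calc (2 * t + n) ^ 2 * t ^ 4 ≤ (2 * (t + n)) ^ 2 * t ^ 4 := by gcongr; linarith
        _ = 4 * ((t * (t + n)) ^ 2 * t ^ 2) := by ring
        _ ≤ 4 * ((t * (t + n)) ^ 2 * (t * (t + n))) := by gcongr
        _ = _ := by ring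
    have a3 : 0 ≤ 1 / (t * (t + n)) ^ 2 := by positivity
    have a4 : 0 ≤ (2 * t + n) ^ 2 / (t * (t + n)) ^ 3 := by positivity
    have a5 : 5 / t ^ 4 = 1 / t ^ 4 + 4 / t ^ 4 := by ring
    rw [abs_le]; constructor <;> linarith
  have hwv : (t + n / 2) / (t * (t + n)) ^ 2 ≤ 1 / t ^ 3 := by
    rw [div_le_div_iff₀ (by positivity) (by positivity)]
    calc (t + n / 2) * t ^ 3 ≤ (t + n) * t ^ 3 := by gcongr; linarith
      _ = (t * (t + n)) * t ^ 2 := by ring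
      _ ≤ (t * (t + n)) * (t * (t + n)) := by gcongr
      _ = _ := by ring
  have hfin := (hw.fun_mul hd).const_mul ((-1 : ℝ) ^ n)
  rw [hev.deriv_eq, hfin.deriv, abs_mul, abs_pow, abs_neg, abs_one, one_pow, one_mul]
  refine (abs_add_le _ _).trans ?_
  rw [abs_mul, abs_mul, abs_of_nonneg p0,
    abs_of_nonneg (by positivity : 0 ≤ (t + n / 2) / (t * (t + n)) ^ 2)]
  calc _ ≤ 5 / t ^ 4 * 1 + 1 / t ^ 3 * (4 * n / t) := by gcongr
    _ = _ := by field_simp; ring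

lemma zf_sum4 : HasSum (fun k : ℕ => 1 / ((k : ℝ) + 1) ^ 4) (Real.pi ^ 4 / 90) := by
  have := (hasSum_nat_add_iff' 1).2 hasSum_zeta_four
  simpa using this

lemma zfR_summable (n : ℕ) : Summable fun k : ℕ => deriv (zfR n) ((k : ℝ) + 1) :=
  Summable.of_norm_bounded (zf_sum4.summable.mul_left (4 * (n : ℝ) + 5))
    fun k => by simpa using zfR_bound n k

def zfI (n : ℕ) : ℝ := - ∑' k : ℕ, deriv (zfR n) ((k : ℝ) + 1)

lemma zfI_bound (n : ℕ) : |zfI n| ≤ (4 * n + 5) * (Real.pi ^ 4 / 90) := by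
  rw [zfI, abs_neg]
  exact tsum_of_norm_bounded (f := fun k : ℕ => deriv (zfR n) ((k : ℝ) + 1))
    (zf_sum4.mul_left (4 * (n : ℝ) + 5)) fun k => zfR_bound n k

lemma zfI_rec (m : ℕ) :
    ((m : ℝ) + 2) ^ 5 * zfI (m + 2) =
      3 * (2 * ((m : ℝ) + 1) + 1) * (3 * ((m : ℝ) + 1) ^ 2 + 3 * (m + 1) + 1) *
          (15 * ((m : ℝ) + 1) ^ 2 + 15 * (m + 1) + 4) * zfI (m + 1)
      + 3 * ((m : ℝ) + 1) ^ 3 * (9 * ((m : ℝ) + 1) ^ 2 - 1) * zfI m := by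
  have hc := fun t => @zf_cert m t
  generalize hα : ((m : ℝ) + 2) ^ 5 = α at *
  generalize hβ : 3 * (2 * ((m : ℝ) + 1) + 1) * (3 * ((m : ℝ) + 1) ^ 2 + 3 * (m + 1) + 1) *
          (15 * ((m : ℝ) + 1) ^ 2 + 15 * (m + 1) + 4) = β at *
  generalize hγ : 3 * ((m : ℝ) + 1) ^ 3 * (9 * ((m : ℝ) + 1) ^ 2 - 1) = γ at *
  have hd : ∀ k : ℕ, deriv (fun t => α * zfR (m + 2) t - β * zfR (m + 1) t - γ * zfR m t)
      ((k : ℝ) + 1) = α * deriv (zfR (m + 2)) ((k : ℝ) + 1) - β * deriv (zfR (m + 1)) ((k : ℝ) + 1)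
        - γ * deriv (zfR m) ((k : ℝ) + 1) := by
    intro k
    have hk : (0 : ℝ) < k + 1 := by positivity
    exact ((((zfR_diff (m + 2) hk).hasDerivAt.const_mul α).fun_sub
      ((zfR_diff (m + 1) hk).hasDerivAt.const_mul β)).fun_sub
      ((zfR_diff m hk).hasDerivAt.const_mul γ)).deriv
  have s2 := (zfR_summable (m + 2)).mul_left α
  have s1 := (zfR_summable (m + 1)).mul_left β
  have s0 := (zfR_summable m).mul_left γ
  have ht := zf_tele (zfS_deriv_tendsto m) (fun t => zfS_diff m) hc (by
    simp_rw [hd]; exact (s2.sub s1).sub s0)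
  simp_rw [hd] at ht
  rw [(s2.sub s1).tsum_sub s0, s2.tsum_sub s1, tsum_mul_left, tsum_mul_left, tsum_mul_left,
    zfS_deriv_one] at ht
  unfold zfI
  linarith

lemma zfR_zero_deriv (k : ℕ) : deriv (zfR 0) ((k : ℝ) + 1) = -3 * (1 / ((k : ℝ) + 1) ^ 4) := by
  have hk : (0 : ℝ) < k + 1 := by positivity
  have hev : zfR 0 =ᶠ[𝓝 ((k : ℝ) + 1)] fun t => (t ^ 3)⁻¹ := by
    filter_upwards [eventually_gt_nhds hk] with s hs
    simp [zfR, zfA, zfB]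
    field_simp
  have hd := (hasDerivAt_pow 3 ((k : ℝ) + 1)).fun_inv (by positivity)
  rw [hev.deriv_eq, hd.deriv]
  field_simp
  norm_num
  ring

lemma zfI_zero : zfI 0 = 3 * (Real.pi ^ 4 / 90) := by
  unfold zfI
  simp_rw [zfR_zero_deriv]
  rw [tsum_mul_left, zf_sum4.tsum_eq]
  ring

def zfH (t : ℝ) : ℝ := 13 / 2 * t⁻¹ ^ 2 + 6 * t⁻¹ ^ 3 + 2 * t⁻¹ ^ 4

lemma zfH_hasDeriv {t : ℝ} (ht : 0 < t) : HasDerivAt zfH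
    (-13 * t⁻¹ ^ 3 - 18 * t⁻¹ ^ 4 - 8 * t⁻¹ ^ 5) t := by
  have i := hasDerivAt_inv ht.ne'
  have e := (((i.fun_pow 2).const_mul (13 / 2)).fun_add ((i.fun_pow 3).const_mul 6)).fun_add
    ((i.fun_pow 4).const_mul 2)
  refine HasDerivAt.congr_deriv e ?_
  norm_num
  field_simp
  ring

lemma zfI_one : zfI 1 = 12 * zfI 0 - 39 := by
  have hc : ∀ t : ℝ, 0 < t → zfR 1 t - 12 * zfR 0 t = zfH (t + 1) - zfH t := by
    intro t ht
    simp [zfR, zfA, zfB, zfH, Finset.prod_range_succ]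
    field_simp
    ring
  have hd : ∀ k : ℕ, deriv (fun t => zfR 1 t - 12 * zfR 0 t)
      ((k : ℝ) + 1) = deriv (zfR 1) ((k : ℝ) + 1) - 12 * deriv (zfR 0) ((k : ℝ) + 1) := by
    intro k
    have hk : (0 : ℝ) < k + 1 := by positivity
    exact ((zfR_diff 1 hk).hasDerivAt.fun_sub
      ((zfR_diff 0 hk).hasDerivAt.const_mul 12)).deriv
  have s1 := zfR_summable 1
  have s0 := (zfR_summable 0).mul_left 12
  have hlim : Tendsto (deriv zfH) atTop (𝓝 0) := by
    apply zf_deriv_tendsto (F := fun u => 13 / 2 * u ^ 2 + 6 * u ^ 3 + 2 * u ^ 4)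
    · fun_prop
    · intro t _; rfl
  have ht := zf_tele hlim (fun t ht => (zfH_hasDeriv ht).differentiableAt) hc (by
    simp_rw [hd]; exact s1.sub s0)
  simp_rw [hd] at ht
  rw [s1.tsum_sub s0, tsum_mul_left, (zfH_hasDeriv one_pos).deriv] at ht
  unfold zfI
  norm_num at ht
  linarith

end

theorem stmt_15 
    (a b p q : ℕ → ℝ)
    (ha0 : a 0 = 0)
    (ha : ∀ n : ℕ, 1 ≤ n → a n = 3 * (2 * (n : ℝ) - 1) * (3 * (n : ℝ) ^ 2 - 3 * (n : ℝ) + 1) * (15 * (n : ℝ) ^ 2 - 15 * (n : ℝ) + 4))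
    (hb0 : b 0 = 13)
    (hb : ∀ n : ℕ, 1 ≤ n → b n = 3 * (n : ℝ) ^ 8 * (9 * (n : ℝ) ^ 2 - 1))
    (hp0 : p 0 = a 0) (hq0 : q 0 = 1)
    (hp1 : p 1 = a 0 * a 1 + b 0) (hq1 : q 1 = a 1)
    (hp : ∀ n : ℕ, p (n + 2) = a (n + 2) * p (n + 1) + b (n + 1) * p n)
    (hq : ∀ n : ℕ, q (n + 2) = a (n + 2) * q (n + 1) + b (n + 1) * q n) :
    Tendsto (fun n => p n / q n) atTop (𝓝 (Real.pi ^ 4 / 90)) := by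
  have ha1 : a 1 = 12 := by rw [ha 1 le_rfl]; norm_num
  have haa : ∀ n : ℕ, a (n + 2) = 3 * (2 * ((n : ℝ) + 1) + 1) *
      (3 * ((n : ℝ) + 1) ^ 2 + 3 * (n + 1) + 1) * (15 * ((n : ℝ) + 1) ^ 2 + 15 * (n + 1) + 4) := by
    intro n; rw [ha (n + 2) (by omega)]; push_cast; ring
  have hbb : ∀ n : ℕ, b (n + 1) = 3 * ((n : ℝ) + 1) ^ 8 * (9 * ((n : ℝ) + 1) ^ 2 - 1) := by
    intro n; rw [hb (n + 1) (by omega)]; push_cast; ring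
  have hfac : ∀ n : ℕ, ((n + 1).factorial : ℝ) = (n + 1) * (n.factorial : ℝ) := by
    intro n; rw [Nat.factorial_succ]; push_cast; ring
  have main : ∀ n : ℕ, q n * (Real.pi ^ 4 / 90) - p n = (n.factorial : ℝ) ^ 5 * zfI n / 3 ∧
      q (n + 1) * (Real.pi ^ 4 / 90) - p (n + 1) =
        ((n + 1).factorial : ℝ) ^ 5 * zfI (n + 1) / 3 := by
    intro n
    induction n with
    | zero =>
      constructor
      · rw [hq0, hp0, ha0, zfI_zero]; simp
      · rw [hq1, hp1, ha0, hb0, ha1, zfI_one, zfI_zero]; simp; ring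
    | succ m ih =>
      refine ⟨ih.2, ?_⟩
      have hr := zfI_rec m
      have e : q (m + 2) * (Real.pi ^ 4 / 90) - p (m + 2) =
          a (m + 2) * (q (m + 1) * (Real.pi ^ 4 / 90) - p (m + 1)) +
          b (m + 1) * (q m * (Real.pi ^ 4 / 90) - p m) := by
        rw [hp, hq]; ring
      show q (m + 2) * (Real.pi ^ 4 / 90) - p (m + 2) =
        ((m + 2).factorial : ℝ) ^ 5 * zfI (m + 2) / 3
      rw [e, ih.1, ih.2, hfac (m + 1), hfac m, haa, hbb]
      push_cast
      linear_combination (-(((m : ℝ) + 1) * (m.factorial : ℝ)) ^ 5 / 3) * hr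
  have hqpos : ∀ n : ℕ, (n.factorial : ℝ) ^ 5 * 2 ^ n ≤ q n ∧
      ((n + 1).factorial : ℝ) ^ 5 * 2 ^ (n + 1) ≤ q (n + 1) := by
    intro n
    induction n with
    | zero => rw [hq0, hq1, ha1]; norm_num
    | succ m ih =>
      refine ⟨ih.2, ?_⟩
      show ((m + 2).factorial : ℝ) ^ 5 * 2 ^ (m + 2) ≤ q (m + 2)
      have h0 : 0 ≤ q m := le_trans (by positivity) ih.1
      have h1 : 0 ≤ b (m + 1) := by
        rw [hbb]
        have : (0 : ℝ) ≤ 9 * ((m : ℝ) + 1) ^ 2 - 1 := by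
          have : (0 : ℝ) ≤ m := by positivity
          nlinarith
        positivity
      have h2 : 2 * ((m : ℝ) + 2) ^ 5 ≤ a (m + 2) := by
        rw [haa, ← sub_nonneg]
        ring_nf
        positivity
      rw [hq, hfac (m + 1)]
      push_cast
      calc (((m : ℝ) + 1 + 1) * ((m + 1).factorial : ℝ)) ^ 5 * 2 ^ (m + 2)
          = 2 * ((m : ℝ) + 2) ^ 5 * (((m + 1).factorial : ℝ) ^ 5 * 2 ^ (m + 1)) := by ring
        _ ≤ a (m + 2) * q (m + 1) := by
          apply mul_le_mul h2 ih.2 (by positivity)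
          exact le_trans (by positivity) h2
        _ ≤ _ := by have := mul_nonneg h1 h0; linarith
  have hlim : Tendsto (fun n : ℕ => (4 * (n : ℝ) + 5) * (Real.pi ^ 4 / 90) / 3 * (1 / 2) ^ n)
      atTop (𝓝 0) := by
    have l1 : Tendsto (fun n : ℕ => (n : ℝ) * (1 / 2 : ℝ) ^ n) atTop (𝓝 0) :=
      tendsto_self_mul_const_pow_of_lt_one (by norm_num) (by norm_num)
    have l2 : Tendsto (fun n : ℕ => (1 / 2 : ℝ) ^ n) atTop (𝓝 0) :=
      tendsto_pow_atTop_nhds_zero_of_lt_one (by norm_num) (by norm_num)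
    have := (l1.const_mul (4 * (Real.pi ^ 4 / 90) / 3)).add
      (l2.const_mul (5 * (Real.pi ^ 4 / 90) / 3))
    simp only [mul_zero, add_zero] at this
    refine this.congr fun n => ?_
    ring
  rw [tendsto_iff_norm_sub_tendsto_zero]
  refine squeeze_zero (fun _ => norm_nonneg _) (fun n => ?_) hlim
  have hq1 := (hqpos n).1
  have hF : (0 : ℝ) < (n.factorial : ℝ) ^ 5 := by positivity
  have hqp : 0 < q n := lt_of_lt_of_le (by positivity) hq1
  have e : p n / q n - Real.pi ^ 4 / 90 = - ((n.factorial : ℝ) ^ 5 * zfI n / 3) / q n := by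
    rw [← (main n).1]; field_simp; ring
  rw [e, Real.norm_eq_abs, abs_div, abs_neg, abs_div, abs_mul, abs_of_pos hF, abs_of_pos hqp,
    abs_of_pos (by norm_num : (0 : ℝ) < 3), div_le_iff₀ hqp]
  have hI := zfI_bound n
  calc (n.factorial : ℝ) ^ 5 * |zfI n| / 3
      ≤ (n.factorial : ℝ) ^ 5 * ((4 * n + 5) * (Real.pi ^ 4 / 90)) / 3 := by gcongr
    _ = (4 * (n : ℝ) + 5) * (Real.pi ^ 4 / 90) / 3 * (1 / 2) ^ n *
        ((n.factorial : ℝ) ^ 5 * 2 ^ n) := by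
      rw [div_pow, one_pow]; field_simp
    _ ≤ _ := by gcongr
end

section
/- Define a(0) = 0 and a(n) = 65n⁴ − 130n³ + 105n² − 40n + 6 for n ≥ 1, and b(0) = 7 and b(n) = −4(16n² − 1)n⁶ for n ≥ 1. Then the convergents p(n)/q(n) of the continued fraction with partial quotients (a(n), b(n)) converge to ζ(3) as n → ∞. (This is a new continued fraction for ζ(3) obtained by Apéry acceleration with a multiplier.) -/
open Filter Topology

/-- The Apéry array in its two-component form: `(X n i, Y n i)` with `Y n i = n^3 * X (n-1) i`. -/
noncomputable def aperyState (x0 y0 : ℕ → ℝ) (n : ℕ) : ℕ → ℝ × ℝ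
  | 0 => (x0 n, y0 n)
  | i + 1 =>
    let x := (aperyState x0 y0 n i).1
    let y := (aperyState x0 y0 n i).2
    let m : ℝ := (i : ℝ) + 1
    let x' := (((n : ℝ) ^ 3 + 2 * (n : ℝ) ^ 2 * m + 2 * n * m ^ 2 + m ^ 3) * x - y) / m ^ 3
    (x', m ^ 3 * x + (n - m) * ((n : ℝ) ^ 2 - n * m + m ^ 2) * x')

section system
variable (x0 y0 : ℕ → ℝ)

theorem state_X (n i : ℕ) :
    ((i : ℝ) + 1) ^ 3 * (aperyState x0 y0 n (i + 1)).1 =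
      ((n : ℝ) ^ 3 + 2 * (n : ℝ) ^ 2 * (i + 1) + 2 * n * ((i : ℝ) + 1) ^ 2 + ((i : ℝ) + 1) ^ 3)
        * (aperyState x0 y0 n i).1 - (aperyState x0 y0 n i).2 := by
  have : ((i : ℝ) + 1) ^ 3 ≠ 0 := by positivity
  simp only [aperyState]
  field_simp

theorem state_Y (n i : ℕ) :
    (aperyState x0 y0 n (i + 1)).2 =
      ((i : ℝ) + 1) ^ 3 * (aperyState x0 y0 n i).1 +
       (n - ((i : ℝ) + 1)) * ((n : ℝ) ^ 2 - n * ((i : ℝ) + 1) + ((i : ℝ) + 1) ^ 2)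
        * (aperyState x0 y0 n (i + 1)).1 := by
  simp only [aperyState]

theorem state_shift (h1 : ∀ n : ℕ, y0 (n + 1) = ((n : ℝ) + 1) ^ 3 * x0 n)
    (h2 : ∀ n : ℕ, ((n : ℝ) + 1) ^ 3 * x0 (n + 1) =
      (2 * n + 1) * ((n : ℝ) ^ 2 + n + 1) * x0 n - y0 n) (n i : ℕ) :
    (aperyState x0 y0 (n + 1) i).2 = ((n : ℝ) + 1) ^ 3 * (aperyState x0 y0 n i).1 ∧
    ((n : ℝ) + 1) ^ 3 * (aperyState x0 y0 (n + 1) i).1 =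
      (2 * n + 1) * ((n : ℝ) ^ 2 + n + 1 + 2 * i * (i + 1)) * (aperyState x0 y0 n i).1
        - (aperyState x0 y0 n i).2 := by
  induction i with
  | zero =>
    refine ⟨by simpa [aperyState] using h1 n, ?_⟩
    simpa [aperyState] using h2 n
  | succ i ih =>
    obtain ⟨e1, e2⟩ := ih
    have a1 := state_X x0 y0 n i
    have a2 := state_Y x0 y0 n i
    have b1 := state_X x0 y0 (n + 1) i
    have b2 := state_Y x0 y0 (n + 1) i
    push_cast at b1 b2 ⊢
    have hm : ((i : ℝ) + 1) ^ 3 ≠ 0 := by positivity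
    have hN : ((n : ℝ) + 1) ^ 3 ≠ 0 := by positivity
    generalize (aperyState x0 y0 n i).1 = x at *
    generalize (aperyState x0 y0 n i).2 = y at *
    generalize (aperyState x0 y0 n (i + 1)).1 = x' at *
    generalize (aperyState x0 y0 n (i + 1)).2 = y' at *
    generalize (aperyState x0 y0 (n + 1) i).1 = u at *
    generalize (aperyState x0 y0 (n + 1) i).2 = v at *
    generalize (aperyState x0 y0 (n + 1) (i + 1)).1 = u' at *
    generalize (aperyState x0 y0 (n + 1) (i + 1)).2 = v' at *
    generalize (n : ℝ) = N at *
    generalize (i : ℝ) = I at *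
    subst v
    have hn1 : (N + 1) ^ 3 * u' = (2 * N + 1) * (N ^ 2 + N + 1 + 2 * (I + 1) * (I + 1 + 1)) * x'
        - y' := by
      apply mul_left_cancel₀ hm
      linear_combination (N + 1) ^ 3 * b1
        + ((N + 1) ^ 3 + 2 * (N + 1) ^ 2 * (I + 1) + 2 * (N + 1) * (I + 1) ^ 2 + (I + 1) ^ 3) * e2
        - ((2 * N + 1) * (N ^ 2 + N + 1 + 2 * (I + 1) * (I + 1 + 1))
          - (N - (I + 1)) * (N ^ 2 - N * (I + 1) + (I + 1) ^ 2)) * a1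
        + (I + 1) ^ 3 * a2
    refine ⟨?_, hn1⟩
    apply mul_left_cancel₀ hN
    linear_combination (N + 1) ^ 3 * b2 + (I + 1) ^ 3 * e2
      + (N + 1 - (I + 1)) * ((N + 1) ^ 2 - (N + 1) * (I + 1) + (I + 1) ^ 2) * hn1
      - (N + 1 - (I + 1)) * ((N + 1) ^ 2 - (N + 1) * (I + 1) + (I + 1) ^ 2) * a2
      - (I + 1) ^ 3 * a1

/-- The weighted row sums. -/
noncomputable def rowSum (n : ℕ) : ℝ :=
  ∑ i ∈ Finset.range (n + 1), ((n.choose i : ℕ) : ℝ) ^ 2 * (aperyState x0 y0 n i).1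

theorem rowSum_ext (n M : ℕ) (h : n + 1 ≤ M) :
    rowSum x0 y0 n =
      ∑ i ∈ Finset.range M, ((n.choose i : ℕ) : ℝ) ^ 2 * (aperyState x0 y0 n i).1 := by
  unfold rowSum
  apply Finset.sum_subset
  · intro i hi
    simp only [Finset.mem_range] at *
    omega
  · intro i _ hi
    simp only [Finset.mem_range] at hi
    rw [Nat.choose_eq_zero_of_lt (by omega)]
    simp

theorem choose_a (n i : ℕ) :
    ((n : ℝ) + 1) * ((n.choose i : ℕ) : ℝ) = ((n : ℝ) + 1 - i) * (((n + 1).choose i : ℕ) : ℝ) := by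
  rcases Nat.lt_or_ge (n + 1) i with h | h
  · rw [Nat.choose_eq_zero_of_lt h, Nat.choose_eq_zero_of_lt (by omega)]
    simp
  · have := Nat.choose_mul_succ_eq n i
    have h2 : (((n.choose i * (n + 1) : ℕ)) : ℝ) = (((n + 1).choose i * (n + 1 - i) : ℕ) : ℝ) := by
      rw [this]
    rw [Nat.cast_mul, Nat.cast_mul, Nat.cast_sub h] at h2
    push_cast at h2
    linarith

theorem choose_b (n i : ℕ) :
    ((i : ℝ) + 1) * ((n.choose (i + 1) : ℕ) : ℝ) = ((n : ℝ) - i) * ((n.choose i : ℕ) : ℝ) := by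
  rcases Nat.lt_or_ge n i with h | h
  · rw [Nat.choose_eq_zero_of_lt h, Nat.choose_eq_zero_of_lt (by omega)]
    simp
  · have := Nat.choose_succ_right_eq n i
    have h2 : (((n.choose (i + 1) * (i + 1) : ℕ)) : ℝ) = ((n.choose i * (n - i) : ℕ) : ℝ) := by
      rw [this]
    rw [Nat.cast_mul, Nat.cast_mul, Nat.cast_sub h] at h2
    push_cast at h2
    linarith

theorem telescope (h1 : ∀ n : ℕ, y0 (n + 1) = ((n : ℝ) + 1) ^ 3 * x0 n)
    (h2 : ∀ n : ℕ, ((n : ℝ) + 1) ^ 3 * x0 (n + 1) =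
      (2 * n + 1) * ((n : ℝ) ^ 2 + n + 1) * x0 n - y0 n) (n : ℕ) (N : ℝ) (hN : N = (n : ℝ) + 1)
    (M : ℕ) :
    ∑ i ∈ Finset.range (M + 1),
      ((N + 1) ^ 4 * ((((n + 2).choose i : ℕ) : ℝ) ^ 2 * (aperyState x0 y0 (n + 2) i).1)
      - (65 * N ^ 4 + 130 * N ^ 3 + 105 * N ^ 2 + 40 * N + 6)
        * ((((n + 1).choose i : ℕ) : ℝ) ^ 2 * (aperyState x0 y0 (n + 1) i).1)
      + 4 * (16 * N ^ 2 - 1) * N ^ 2 * (((n.choose i : ℕ) : ℝ) ^ 2 * (aperyState x0 y0 n i).1)) =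
    (((n + 1).choose M : ℕ) : ℝ) ^ 2 *
      (((-63 * N ^ 4 - 125 * N ^ 3 - 99 * N ^ 2 - 36 * N - 5)
          + (-17 * N ^ 3 + 12 * N + 4) * M + (45 * N ^ 2 + 39 * N + 9) * (M : ℝ) ^ 2)
          * (aperyState x0 y0 (n + 1) M).1
      + ((63 * N ^ 4 - N ^ 3 - 4 * N ^ 2) + (-109 * N ^ 3 + 10 * N ^ 2 + 8 * N) * M
          + (68 * N ^ 2 + N - 4) * (M : ℝ) ^ 2 + (-16 * N - 4) * (M : ℝ) ^ 3)
          * (aperyState x0 y0 n M).1) := by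
  have hNp : N ≠ 0 := by rw [hN]; positivity
  have hNp1 : N + 1 ≠ 0 := by rw [hN]; positivity
  induction M with
  | zero =>
    obtain ⟨e1, -⟩ := state_shift x0 y0 h1 h2 n 0
    obtain ⟨-, f2⟩ := state_shift x0 y0 h1 h2 (n + 1) 0
    simp only [zero_add, Finset.sum_range_one, Nat.choose_zero_right, Nat.cast_one, Nat.cast_zero]
    push_cast at f2
    rw [← hN] at e1 f2
    rw [e1] at f2
    rw [show n + 1 + 1 = n + 2 from rfl] at f2
    generalize (aperyState x0 y0 (n + 2) 0).1 = z at *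
    generalize (aperyState x0 y0 (n + 1) 0).1 = x at *
    generalize (aperyState x0 y0 n 0).1 = w at *
    linear_combination (N + 1) * f2
  | succ M ih =>
    rw [Finset.sum_range_succ, ih]
    obtain ⟨e1, -⟩ := state_shift x0 y0 h1 h2 n M
    obtain ⟨e1', -⟩ := state_shift x0 y0 h1 h2 n (M + 1)
    obtain ⟨-, f2⟩ := state_shift x0 y0 h1 h2 (n + 1) (M + 1)
    have a1 := state_X x0 y0 (n + 1) M
    have a2 := state_Y x0 y0 (n + 1) M
    have c1 := choose_b (n + 1) M
    have c2 := choose_a n (M + 1)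
    have c3 := choose_a (n + 1) (M + 1)
    have hm : (M : ℝ) + 1 ≠ 0 := by positivity
    push_cast at *
    rw [← hN] at e1 e1' f2 a1 a2 c1 c2 c3
    rw [e1] at a1
    rw [e1'] at f2 a2
    rw [show n + 1 + 1 = n + 2 from rfl] at *
    have c4 : ((M : ℝ) + 1) * (((n + 2).choose (M + 1) : ℕ) : ℝ)
        = (N + 1) * (((n + 1).choose M : ℕ) : ℝ) := by
      have := Nat.add_one_mul_choose_eq (n + 1) M
      have h3 : (((n + 1 + 1) * (n + 1).choose M : ℕ) : ℝ)
        = ((((n + 1 + 1).choose (M + 1)) * (M + 1) : ℕ) : ℝ) := by rw [this]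
      push_cast at h3
      rw [hN]
      linarith
    clear ih c3 h1 h2 e1 e1'
    generalize (aperyState x0 y0 (n + 2) (M + 1)).1 = z at *
    generalize (aperyState x0 y0 (n + 1) M).1 = x at *
    generalize (aperyState x0 y0 (n + 1) (M + 1)).1 = x' at *
    generalize (aperyState x0 y0 n M).1 = w at *
    generalize (aperyState x0 y0 n (M + 1)).1 = w' at *
    generalize (((n + 1).choose M : ℕ) : ℝ) = c at *
    generalize (((n + 1).choose (M + 1) : ℕ) : ℝ) = c' at *
    generalize ((n.choose (M + 1) : ℕ) : ℝ) = d' at *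
    generalize (((n + 2).choose (M + 1) : ℕ) : ℝ) = b' at *
    generalize (M : ℝ) = I at *
    have hc' : c' = (N - I) * c / (I + 1) := by field_simp; linarith
    have hd' : d' = (N - (I + 1)) * c' / N := by field_simp; linarith
    have hb' : b' = (N + 1) * c / (I + 1) := by field_simp; linarith
    have hw : w = ((N ^ 3 + 2 * N ^ 2 * (I + 1) + 2 * N * (I + 1) ^ 2 + (I + 1) ^ 3) * x
      - (I + 1) ^ 3 * x') / N ^ 3 := by field_simp; linarith
    have hw' : w' = ((I + 1) ^ 3 * x +
      (N - (I + 1)) * (N ^ 2 - N * (I + 1) + (I + 1) ^ 2) * x') / N ^ 3 := by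
      field_simp; linarith
    have hz : z = ((2 * N + 1) * (N ^ 2 + N + 1 + 2 * (I + 1) * (I + 1 + 1)) * x' - N ^ 3 * w')
      / (N + 1) ^ 3 := by field_simp; linarith
    rw [hz, hb', hd', hc', hw', hw]
    field_simp
    ring

theorem rowSum_rec (h1 : ∀ n : ℕ, y0 (n + 1) = ((n : ℝ) + 1) ^ 3 * x0 n)
    (h2 : ∀ n : ℕ, ((n : ℝ) + 1) ^ 3 * x0 (n + 1) =
      (2 * n + 1) * ((n : ℝ) ^ 2 + n + 1) * x0 n - y0 n) (n : ℕ) (N : ℝ) (hN : N = (n : ℝ) + 1) :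
    (N + 1) ^ 4 * rowSum x0 y0 (n + 2) =
      (65 * N ^ 4 + 130 * N ^ 3 + 105 * N ^ 2 + 40 * N + 6) * rowSum x0 y0 (n + 1)
      - 4 * (16 * N ^ 2 - 1) * N ^ 2 * rowSum x0 y0 n := by
  have h := telescope x0 y0 h1 h2 n N hN (n + 2)
  rw [Finset.sum_add_distrib, Finset.sum_sub_distrib, ← Finset.mul_sum, ← Finset.mul_sum,
    ← Finset.mul_sum, ← rowSum_ext x0 y0 n _ (by omega), ← rowSum_ext x0 y0 (n + 1) _ (by omega),
    ← rowSum_ext x0 y0 (n + 2) _ (by omega),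
    Nat.choose_eq_zero_of_lt (show n + 1 < n + 2 by omega)] at h
  simp only [Nat.cast_zero] at h
  linarith

/-- A solution of the continued fraction recurrence is `n!^4` times the row sum. -/
theorem sol_eq (h1 : ∀ n : ℕ, y0 (n + 1) = ((n : ℝ) + 1) ^ 3 * x0 n)
    (h2 : ∀ n : ℕ, ((n : ℝ) + 1) ^ 3 * x0 (n + 1) =
      (2 * n + 1) * ((n : ℝ) ^ 2 + n + 1) * x0 n - y0 n)
    (a b p : ℕ → ℝ)
    (ha : ∀ n : ℕ, 1 ≤ n → a n = 65 * (n : ℝ) ^ 4 - 130 * (n : ℝ) ^ 3 + 105 * (n : ℝ) ^ 2 - 40 * (n : ℝ) + 6)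
    (hb : ∀ n : ℕ, 1 ≤ n → b n = -(4 * (16 * (n : ℝ) ^ 2 - 1) * (n : ℝ) ^ 6))
    (hp : ∀ n : ℕ, p (n + 2) = a (n + 2) * p (n + 1) + b (n + 1) * p n)
    (hp0 : p 0 = rowSum x0 y0 0) (hp1 : p 1 = rowSum x0 y0 1) (n : ℕ) :
    p n = (n.factorial : ℝ) ^ 4 * rowSum x0 y0 n ∧
    p (n + 1) = ((n + 1).factorial : ℝ) ^ 4 * rowSum x0 y0 (n + 1) := by
  induction n with
  | zero => simp [hp0, hp1]
  | succ n ih =>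
    refine ⟨ih.2, ?_⟩
    have h := rowSum_rec x0 y0 h1 h2 n _ rfl
    rw [hp, ih.1, ih.2, ha _ (by omega), hb _ (by omega), Nat.factorial_succ (n + 1),
      Nat.factorial_succ n, show n + 1 + 1 = n + 2 from rfl]
    push_cast
    linear_combination -((n : ℝ) + 1) ^ 4 * (n.factorial : ℝ) ^ 4 * h

end system

/-- Starting data for the denominators. -/
noncomputable def xB : ℕ → ℝ := fun _ => 1
/-- Starting data for the denominators. -/
noncomputable def yB : ℕ → ℝ := fun n => (n : ℝ) ^ 3
/-- Starting data for the numerators. -/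
noncomputable def xA : ℕ → ℝ := fun n => ∑ m ∈ Finset.range n, 1 / ((m : ℝ) + 1) ^ 3
/-- Starting data for the numerators. -/
noncomputable def yA : ℕ → ℝ := fun n => (n : ℝ) ^ 3 * xA n - 1

theorem xA_succ (n : ℕ) : ((n : ℝ) + 1) ^ 3 * xA (n + 1) = ((n : ℝ) + 1) ^ 3 * xA n + 1 := by
  unfold xA
  rw [Finset.sum_range_succ]
  have : ((n : ℝ) + 1) ^ 3 ≠ 0 := by positivity
  field_simp

theorem B_h1 (n : ℕ) : yB (n + 1) = ((n : ℝ) + 1) ^ 3 * xB n := by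
  simp [yB, xB]

theorem B_h2 (n : ℕ) : ((n : ℝ) + 1) ^ 3 * xB (n + 1) =
      (2 * n + 1) * ((n : ℝ) ^ 2 + n + 1) * xB n - yB n := by
  simp only [yB, xB]; ring

theorem A_h1 (n : ℕ) : yA (n + 1) = ((n : ℝ) + 1) ^ 3 * xA n := by
  have := xA_succ n
  simp only [yA]
  push_cast
  linarith

theorem A_h2 (n : ℕ) : ((n : ℝ) + 1) ^ 3 * xA (n + 1) =
      (2 * n + 1) * ((n : ℝ) ^ 2 + n + 1) * xA n - yA n := by
  rw [xA_succ, yA]; ring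

theorem cas (n i : ℕ) :
    (aperyState xA yA n i).1 * (aperyState xB yB n i).2
      - (aperyState xB yB n i).1 * (aperyState xA yA n i).2 = 1 := by
  induction i with
  | zero => simp only [aperyState, xB, yB, yA]; ring
  | succ i ih =>
    have a1 := state_X xA yA n i
    have b1 := state_X xB yB n i
    rw [state_Y xA yA n i, state_Y xB yB n i]
    linear_combination ih + (aperyState xB yB n i).1 * a1 - (aperyState xA yA n i).1 * b1

theorem B_mono (n i : ℕ) :
    1 ≤ (aperyState xB yB n i).1 ∧
    (aperyState xB yB n i).2 ≤ (((n : ℝ) - i) * ((n : ℝ) ^ 2 - n * i + (i : ℝ) ^ 2) + (i : ℝ) ^ 3)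
      * (aperyState xB yB n i).1 ∧
    ((i : ℝ) + 1) ^ 3 * (aperyState xB yB n (i + 1)).1 ≥
      (((i : ℝ) + 1) ^ 3 + 2 * (2 * i + 1) * (n * (n + 1))) * (aperyState xB yB n i).1 := by
  have key : ∀ i : ℕ,
    (aperyState xB yB n i).2 ≤ (((n : ℝ) - i) * ((n : ℝ) ^ 2 - n * i + (i : ℝ) ^ 2) + (i : ℝ) ^ 3)
      * (aperyState xB yB n i).1 →
    ((i : ℝ) + 1) ^ 3 * (aperyState xB yB n (i + 1)).1 ≥
      (((i : ℝ) + 1) ^ 3 + 2 * (2 * i + 1) * (n * (n + 1))) * (aperyState xB yB n i).1 := by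
    intro i h
    rw [state_X xB yB n i]
    linarith
  induction i with
  | zero =>
    have h0 : (aperyState xB yB n 0).2 ≤ (((n : ℝ) - (0 : ℕ)) * ((n : ℝ) ^ 2 - n * (0 : ℕ) + ((0 : ℕ) : ℝ) ^ 2) + ((0 : ℕ) : ℝ) ^ 3)
      * (aperyState xB yB n 0).1 := by
      simp only [aperyState, xB, yB, Nat.cast_zero]
      apply le_of_eq; ring
    exact ⟨by simp [aperyState, xB], h0, key 0 h0⟩
  | succ i ih =>
    obtain ⟨i1, -, i3⟩ := ih
    have hm : (0 : ℝ) < ((i : ℝ) + 1) ^ 3 := by positivity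
    have hle : (aperyState xB yB n i).1 ≤ (aperyState xB yB n (i + 1)).1 := by
      apply le_of_mul_le_mul_left _ hm
      have : 0 ≤ 2 * (2 * (i : ℝ) + 1) * (n * (n + 1)) * (aperyState xB yB n i).1 := by positivity
      linarith
    have h0 : (aperyState xB yB n (i + 1)).2 ≤ (((n : ℝ) - ((i + 1 : ℕ) : ℝ)) * ((n : ℝ) ^ 2 - n * ((i + 1 : ℕ) : ℝ) + (((i + 1 : ℕ)) : ℝ) ^ 2) + (((i + 1 : ℕ)) : ℝ) ^ 3)
      * (aperyState xB yB n (i + 1)).1 := by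
      rw [state_Y xB yB n i]
      push_cast
      have := mul_le_mul_of_nonneg_left hle hm.le
      linarith
    exact ⟨i1.trans hle, h0, key _ h0⟩

theorem B_one_le (n i : ℕ) : 1 ≤ (aperyState xB yB n i).1 := (B_mono n i).1

theorem B_succ_le (n i : ℕ) : (aperyState xB yB n i).1 ≤ (aperyState xB yB n (i + 1)).1 := by
  have h := B_one_le n i
  have hm : (0 : ℝ) < ((i : ℝ) + 1) ^ 3 := by positivity
  apply le_of_mul_le_mul_left _ hm
  have : 0 ≤ 2 * (2 * (i : ℝ) + 1) * (n * (n + 1)) * (aperyState xB yB n i).1 := by positivity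
  linarith [(B_mono n i).2.2]

theorem B_big (n i : ℕ) : 1 + 2 * ((n : ℝ) * (n + 1)) ≤ (aperyState xB yB n (i + 1)).1 := by
  induction i with
  | zero =>
    have h := (B_mono n 0).2.2
    have : (aperyState xB yB n 0).1 = 1 := by simp [aperyState, xB]
    rw [this] at h
    norm_num at h ⊢
    linarith
  | succ i ih => exact ih.trans (B_succ_le n (i + 1))

theorem A_bounds (n i : ℕ) :
    xA n * (aperyState xB yB n i).1 ≤ (aperyState xA yA n i).1 ∧
    (aperyState xA yA n i).1 ≤
      (xA n + i / (1 + 2 * ((n : ℝ) * (n + 1)))) * (aperyState xB yB n i).1 := by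
  induction i with
  | zero => simp [aperyState, xB]
  | succ i ih =>
    have c := cas n i
    have a1 := state_X xA yA n i
    have b1 := state_X xB yB n i
    have hB := B_one_le n i
    have hB' := B_big n i
    have hm : (1 : ℝ) ≤ ((i : ℝ) + 1) ^ 3 := one_le_pow₀ (by linarith [(Nat.cast_nonneg i : (0:ℝ) ≤ i)])
    have hD : (0 : ℝ) < 1 + 2 * ((n : ℝ) * (n + 1)) := by positivity
    have e : (aperyState xA yA n (i + 1)).1 * (aperyState xB yB n i).1
        = (aperyState xA yA n i).1 * (aperyState xB yB n (i + 1)).1 + 1 / ((i : ℝ) + 1) ^ 3 := by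
      have : ((i : ℝ) + 1) ^ 3 ≠ 0 := by positivity
      field_simp
      linear_combination c + (aperyState xB yB n i).1 * a1 - (aperyState xA yA n i).1 * b1
    have hpos : 0 ≤ 1 / ((i : ℝ) + 1) ^ 3 := by positivity
    have hle1 : 1 / ((i : ℝ) + 1) ^ 3 ≤ 1 := by
      rw [div_le_one (by positivity)]; exact hm
    push_cast
    generalize (aperyState xA yA n (i + 1)).1 = A' at *
    generalize (aperyState xA yA n i).1 = A at *
    generalize (aperyState xB yB n (i + 1)).1 = B' at *
    generalize (aperyState xB yB n i).1 = B at *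
    generalize 1 / ((i : ℝ) + 1) ^ 3 = t at *
    generalize 1 + 2 * ((n : ℝ) * (n + 1)) = D at *
    have hBp : 0 < B := by linarith
    have hBp' : 0 < B' := by linarith
    constructor
    · apply le_of_mul_le_mul_right _ hBp
      rw [e]
      have := mul_le_mul_of_nonneg_right ih.1 hBp'.le
      linarith
    · apply le_of_mul_le_mul_right _ hBp
      rw [e]
      have h := mul_le_mul_of_nonneg_right ih.2 hBp'.le
      have h3 : 1 ≤ 1 / D * B' * B := by
        have : 1 ≤ 1 / D * B' := by
          rw [one_div, inv_mul_eq_div, le_div_iff₀ hD]; linarith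
        nlinarith
      have h4 : (xA n + ((i : ℝ) + 1) / D) * B' * B
        = (xA n + i / D) * B * B' + 1 / D * B' * B := by ring
      linarith

theorem rowSum_B_pos (n : ℕ) : 0 < rowSum xB yB n := by
  unfold rowSum
  apply Finset.sum_pos
  · intro i hi
    simp only [Finset.mem_range] at hi
    have h1 : 0 < n.choose i := Nat.choose_pos (by omega)
    have h2 := B_one_le n i
    have h3 : (0 : ℝ) < (n.choose i : ℕ) := by exact_mod_cast h1
    have h4 : 0 < (aperyState xB yB n i).1 := by linarith
    positivity
  · simp

theorem rowSum_lower (n : ℕ) : xA n * rowSum xB yB n ≤ rowSum xA yA n := by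
  unfold rowSum
  rw [Finset.mul_sum]
  apply Finset.sum_le_sum
  intro i _
  have := mul_le_mul_of_nonneg_left (A_bounds n i).1 (sq_nonneg ((n.choose i : ℕ) : ℝ))
  linarith

theorem rowSum_upper (n : ℕ) :
    rowSum xA yA n ≤ (xA n + 1 / ((n : ℝ) + 1)) * rowSum xB yB n := by
  unfold rowSum
  rw [Finset.mul_sum]
  apply Finset.sum_le_sum
  intro i hi
  simp only [Finset.mem_range] at hi
  have hin : (i : ℝ) ≤ n := by exact_mod_cast (by omega : i ≤ n)
  have hn : (0 : ℝ) ≤ n := Nat.cast_nonneg n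
  have hq : (i : ℝ) / (1 + 2 * ((n : ℝ) * (n + 1))) ≤ 1 / ((n : ℝ) + 1) := by
    rw [div_le_div_iff₀ (by positivity) (by positivity)]
    nlinarith
  have hB := B_one_le n i
  have h5 : (aperyState xA yA n i).1 ≤ (xA n + 1 / ((n : ℝ) + 1)) * (aperyState xB yB n i).1 :=
    (A_bounds n i).2.trans (mul_le_mul_of_nonneg_right (by linarith) (by linarith))
  have := mul_le_mul_of_nonneg_left h5 (sq_nonneg ((n.choose i : ℕ) : ℝ))
  linarith

theorem rowB0 : rowSum xB yB 0 = 1 := by simp [rowSum, aperyState, xB]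
theorem rowB1 : rowSum xB yB 1 = 6 := by
  simp [rowSum, aperyState, xB, yB, Finset.sum_range_succ]; norm_num
theorem rowA0 : rowSum xA yA 0 = 0 := by simp [rowSum, aperyState, xA]
theorem rowA1 : rowSum xA yA 1 = 7 := by
  simp [rowSum, aperyState, xA, yA, Finset.sum_range_succ]; norm_num

theorem stmt_16 
    (a b p q : ℕ → ℝ)
    (ha0 : a 0 = 0)
    (ha : ∀ n : ℕ, 1 ≤ n → a n = 65 * (n : ℝ) ^ 4 - 130 * (n : ℝ) ^ 3 + 105 * (n : ℝ) ^ 2 - 40 * (n : ℝ) + 6)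
    (hb0 : b 0 = 7)
    (hb : ∀ n : ℕ, 1 ≤ n → b n = -(4 * (16 * (n : ℝ) ^ 2 - 1) * (n : ℝ) ^ 6))
    (hp0 : p 0 = a 0) (hq0 : q 0 = 1)
    (hp1 : p 1 = a 0 * a 1 + b 0) (hq1 : q 1 = a 1)
    (hp : ∀ n : ℕ, p (n + 2) = a (n + 2) * p (n + 1) + b (n + 1) * p n)
    (hq : ∀ n : ℕ, q (n + 2) = a (n + 2) * q (n + 1) + b (n + 1) * q n) :
    Tendsto (fun n => p n / q n) atTop (𝓝 (∑' n : ℕ, 1 / ((n : ℝ) + 1) ^ 3)) := by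
  have hpe := fun n => (sol_eq xA yA A_h1 A_h2 a b p ha hb hp
    (by rw [hp0, ha0, rowA0]) (by rw [hp1, ha0, hb0, rowA1]; ring) n).1
  have hqe := fun n => (sol_eq xB yB B_h1 B_h2 a b q ha hb hq
    (by rw [hq0, rowB0]) (by rw [hq1, ha 1 le_rfl, rowB1]; norm_num) n).1
  have hr : ∀ n, p n / q n = rowSum xA yA n / rowSum xB yB n := by
    intro n
    rw [hpe, hqe]
    have : (n.factorial : ℝ) ^ 4 ≠ 0 := by positivity
    exact mul_div_mul_left _ _ this
  have hsum : Summable (fun n : ℕ => 1 / ((n : ℝ) + 1) ^ 3) := by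
    have := (summable_nat_add_iff 1).mpr
      (Real.summable_one_div_nat_pow.mpr (by norm_num : 1 < 3))
    simpa using this
  have hlim : Tendsto xA atTop (𝓝 (∑' n : ℕ, 1 / ((n : ℝ) + 1) ^ 3)) :=
    hsum.hasSum.tendsto_sum_nat
  have hlim2 : Tendsto (fun n : ℕ => xA n + 1 / ((n : ℝ) + 1)) atTop
      (𝓝 (∑' n : ℕ, 1 / ((n : ℝ) + 1) ^ 3)) := by
    simpa using hlim.add tendsto_one_div_add_atTop_nhds_zero_nat
  refine tendsto_of_tendsto_of_tendsto_of_le_of_le hlim hlim2 ?_ ?_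
  · intro n
    simp only [hr]
    rw [le_div_iff₀ (rowSum_B_pos n)]
    exact rowSum_lower n
  · intro n
    simp only [hr]
    rw [div_le_iff₀ (rowSum_B_pos n)]
    exact rowSum_upper n
end

section
/- Define a(0) = 0 and a(n) = 4n² − 3n + 1 for n ≥ 1, and b(0) = 1/2 and b(n) = −2n³(2n+1) for n ≥ 1. Then the convergents p(n)/q(n) of the continued fraction with partial quotients (a(n), b(n)) converge to log(2) as n → ∞. -/
open Filter Topology

noncomputable def AA (n k : ℕ) : ℝ := ∏ j ∈ Finset.range n, ((j : ℝ) + 1 / 2) / ((j : ℝ) + k + 1)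

noncomputable def SS (N k : ℕ) : ℝ := ∑ n ∈ Finset.range N, AA (n + 1) k / ((n : ℝ) + 1)

noncomputable def HH (K : ℕ) : ℝ :=
  ∑ k ∈ Finset.range K, (1 / ((k : ℝ) + 1 / 2) - 1 / ((k : ℝ) + 1))

lemma AA_zero (k : ℕ) : AA 0 k = 1 := by simp [AA]

lemma AA_succ (n k : ℕ) : AA (n + 1) k = AA n k * (((n : ℝ) + 1 / 2) / ((n : ℝ) + k + 1)) := by
  simp only [AA, Finset.prod_range_succ]

lemma SS_succ (n k : ℕ) : SS (n + 1) k = SS n k + AA (n + 1) k / ((n : ℝ) + 1) := by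
  simp only [SS, Finset.sum_range_succ]

lemma AA_nonneg (n k : ℕ) : 0 ≤ AA n k := by
  unfold AA
  apply Finset.prod_nonneg
  intro i _
  positivity

lemma AA_shift (n k : ℕ) : AA n (k + 1) = AA n k * (((k : ℝ) + 1) / ((k : ℝ) + n + 1)) := by
  induction n with
  | zero =>
    have : (k : ℝ) + 1 ≠ 0 := by positivity
    simp [AA_zero, this]
  | succ n ih =>
    rw [AA_succ, AA_succ, ih]
    have h1 : (k : ℝ) + n + 1 ≠ 0 := by positivity
    have h2 : (n : ℝ) + k + 1 ≠ 0 := by positivity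
    have h3 : (k : ℝ) + (n + 1) + 1 ≠ 0 := by positivity
    have h4 : (n : ℝ) + (k + 1) + 1 ≠ 0 := by positivity
    push_cast
    field_simp
    ring

lemma SS_shift (N k : ℕ) : SS N k - SS N (k + 1) =
    (1 - AA (N + 1) k) / ((k : ℝ) + 1 / 2) - 1 / ((k : ℝ) + 1) := by
  have h0 : (k : ℝ) + 1 / 2 ≠ 0 := by positivity
  have h5 : (k : ℝ) + 1 ≠ 0 := by positivity
  induction N with
  | zero =>
    simp only [AA_succ, AA_zero, SS]
    push_cast
    simp only [Finset.range_zero, Finset.sum_empty]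
    field_simp
    ring
  | succ n ih =>
    rw [SS_succ, SS_succ, AA_succ (n + 1) k, AA_shift (n + 1) k]
    have h1 : (n : ℝ) + 1 ≠ 0 := by positivity
    have h3 : (k : ℝ) + (n + 1) + 1 ≠ 0 := by positivity
    have h4 : (n : ℝ) + 1 + k + 1 ≠ 0 := by positivity
    have key : AA (n + 1) k / ((n : ℝ) + 1)
        - AA (n + 1) k * (((k : ℝ) + 1) / ((k : ℝ) + (n + 1) + 1)) / ((n : ℝ) + 1)
        = (AA (n + 1) k - AA (n + 1) k * (((n : ℝ) + 1 + 1 / 2) / ((n : ℝ) + 1 + k + 1)))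
          / ((k : ℝ) + 1 / 2) := by
      have h6 : 2 * (k : ℝ) + 1 ≠ 0 := by positivity
      field_simp
      ring
    push_cast
    have e : (1 - AA (n + 1) k * (((n : ℝ) + 1 + 1 / 2) / ((n : ℝ) + 1 + k + 1))) / ((k : ℝ) + 1 / 2)
      = (1 - AA (n + 1) k) / ((k : ℝ) + 1 / 2) + (AA (n + 1) k - AA (n + 1) k * (((n : ℝ) + 1 + 1 / 2) / ((n : ℝ) + 1 + k + 1)))
          / ((k : ℝ) + 1 / 2) := by ring
    rw [e, ← key]
    linarith

lemma SS_expand (N K : ℕ) : SS N 0 = SS N K + HH K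
    - ∑ k ∈ Finset.range K, AA (N + 1) k / ((k : ℝ) + 1 / 2) := by
  induction K with
  | zero => simp [HH]
  | succ K ih =>
    have h := SS_shift N K
    rw [sub_div] at h
    rw [HH, Finset.sum_range_succ, Finset.sum_range_succ]
    rw [HH] at ih
    linarith

lemma AA_sq (n k : ℕ) : AA n k ^ 2 * (2 * n + 1) ≤ 1 := by
  induction n with
  | zero => simp [AA_zero]
  | succ n ih =>
    rw [AA_succ, mul_pow]
    have h : (((n : ℝ) + 1 / 2) / ((n : ℝ) + k + 1)) ≤ ((n : ℝ) + 1 / 2) / ((n : ℝ) + 1) := by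
      gcongr
      linarith [(Nat.cast_nonneg k : (0 : ℝ) ≤ k)]
    have h2 : (((n : ℝ) + 1 / 2) / ((n : ℝ) + 1)) ^ 2 * (2 * ((n : ℝ) + 1) + 1) ≤ 2 * n + 1 := by
      rw [div_pow, div_mul_eq_mul_div, div_le_iff₀ (by positivity)]
      nlinarith [(Nat.cast_nonneg n : (0 : ℝ) ≤ n)]
    have h3 : (((n : ℝ) + 1 / 2) / ((n : ℝ) + k + 1)) ^ 2 ≤ (((n : ℝ) + 1 / 2) / ((n : ℝ) + 1)) ^ 2 := by
      gcongr
    have h4 : (((n : ℝ) + 1 / 2) / ((n : ℝ) + k + 1)) ^ 2 * (2 * ((n : ℝ) + 1) + 1) ≤ 2 * n + 1 :=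
      le_trans (by gcongr) h2
    push_cast
    calc _ = AA n k ^ 2 * ((((n : ℝ) + 1 / 2) / ((n : ℝ) + k + 1)) ^ 2 * (2 * ((n : ℝ) + 1) + 1)) := by ring
      _ ≤ AA n k ^ 2 * (2 * n + 1) := by gcongr
      _ ≤ 1 := ih

lemma AA_tendsto (k : ℕ) : Tendsto (fun n => AA n k) atTop (𝓝 0) := by
  have h : Tendsto (fun n => AA n k ^ 2) atTop (𝓝 0) := by
    refine squeeze_zero (fun n => sq_nonneg _) (fun n => ?_) tendsto_one_div_add_atTop_nhds_zero_nat
    rw [le_div_iff₀ (by positivity)]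
    refine le_trans ?_ (AA_sq n k)
    gcongr
    linarith [(Nat.cast_nonneg n : (0 : ℝ) ≤ n)]
  have h2 := h.sqrt
  simpa [Real.sqrt_sq (AA_nonneg _ _)] using h2

lemma AA_bound (n k : ℕ) (hk : 1 ≤ k) : AA (n + 1) k ≤ 1 / (((k : ℝ) + 1) * ((n : ℝ) + 2)) := by
  have hk' : (1 : ℝ) ≤ k := by exact_mod_cast hk
  induction n with
  | zero =>
    rw [AA_succ, AA_zero]
    apply le_of_eq
    have : (k : ℝ) + 1 ≠ 0 := by positivity
    push_cast
    simp only [zero_add]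
    field_simp
  | succ n ih =>
    rw [AA_succ]
    have h : ((n : ℝ) + 1 + 1 / 2) / ((n : ℝ) + 1 + k + 1) ≤ ((n : ℝ) + 2) / ((n : ℝ) + 3) := by
      exact div_le_div₀ (by positivity) (by linarith) (by positivity) (by linarith)
    push_cast
    calc _ ≤ 1 / (((k : ℝ) + 1) * ((n : ℝ) + 2)) * (((n : ℝ) + 2) / ((n : ℝ) + 3)) := by
            gcongr
      _ = _ := by
        have : (n : ℝ) + 1 + 2 = n + 3 := by ring
        rw [this]
        field_simp

lemma SS_bound (N k : ℕ) (hk : 1 ≤ k) : SS N k ≤ 1 / ((k : ℝ) + 1) * (1 - 1 / ((N : ℝ) + 1)) := by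
  induction N with
  | zero => simp [SS]
  | succ n ih =>
    rw [SS_succ]
    have h : AA (n + 1) k / ((n : ℝ) + 1) ≤ 1 / (((k : ℝ) + 1) * ((n : ℝ) + 2)) / ((n : ℝ) + 1) := by
      gcongr
      exact AA_bound n k hk
    have e : 1 / ((k : ℝ) + 1) * (1 - 1 / ((n : ℝ) + 1 + 1)) = 1 / ((k : ℝ) + 1) * (1 - 1 / ((n : ℝ) + 1))
        + 1 / (((k : ℝ) + 1) * ((n : ℝ) + 2)) / ((n : ℝ) + 1) := by
      have h2 : (n : ℝ) + 1 + 1 = n + 2 := by ring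
      rw [h2]
      field_simp
      ring
    push_cast
    rw [e]
    linarith

lemma SS_nonneg (N k : ℕ) : 0 ≤ SS N k :=
  Finset.sum_nonneg fun i _ => div_nonneg (AA_nonneg _ _) (by positivity)

lemma HH_eq (K : ℕ) : HH K = 2 * ((harmonic (2 * K) : ℝ) - (harmonic K : ℝ)) := by
  induction K with
  | zero => simp [HH]
  | succ K ih =>
    have : HH (K + 1) = HH K + (1 / ((K : ℝ) + 1 / 2) - 1 / ((K : ℝ) + 1)) := by
      simp only [HH, Finset.sum_range_succ]
    rw [this, ih, show 2 * (K + 1) = 2 * K + 1 + 1 by ring, harmonic_succ, harmonic_succ, harmonic_succ]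
    push_cast
    have : 2 * (K : ℝ) + 1 + 1 = 2 * (K + 1) := by ring
    rw [this]
    field_simp
    ring

lemma HH_tendsto : Tendsto HH atTop (𝓝 (2 * Real.log 2)) := by
  have h1 := Real.tendsto_harmonic_sub_log
  have h2 := h1.comp (tendsto_id.const_mul_atTop' (show 0 < 2 by norm_num) : Tendsto (fun n : ℕ => 2 * n) atTop atTop)
  have h3 := ((h2.sub h1).add_const (Real.log 2)).const_mul 2
  rw [sub_self, zero_add] at h3
  refine h3.congr' ?_
  filter_upwards [eventually_gt_atTop 0] with K hK
  have : (K : ℝ) ≠ 0 := by positivity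
  simp only [Function.comp, HH_eq]
  push_cast
  rw [Real.log_mul (by norm_num) this]
  ring

lemma SS_tendsto : Tendsto (fun N => SS N 0) atTop (𝓝 (2 * Real.log 2)) := by
  rw [Metric.tendsto_atTop']
  intro ε hε
  have a1 : ∀ᶠ K in atTop, |HH K - 2 * Real.log 2| < ε / 3 := by
    have := (Metric.tendsto_nhds.1 HH_tendsto) (ε / 3) (by positivity)
    simpa [Real.dist_eq] using this
  have a2 : ∀ᶠ K : ℕ in atTop, 1 / ((K : ℝ) + 1) < ε / 3 :=
    (tendsto_one_div_add_atTop_nhds_zero_nat (𝕜 := ℝ)).eventually_lt_const (by positivity)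
  obtain ⟨K, ⟨hK1, hK2⟩, hK⟩ := ((a1.and a2).and (eventually_ge_atTop 1)).exists
  have a3 : Tendsto (fun N => ∑ k ∈ Finset.range K, AA (N + 1) k / ((k : ℝ) + 1 / 2)) atTop (𝓝 0) := by
    have : Tendsto (fun N => ∑ k ∈ Finset.range K, AA (N + 1) k / ((k : ℝ) + 1 / 2)) atTop
        (𝓝 (∑ k ∈ Finset.range K, 0 / ((k : ℝ) + 1 / 2))) :=
      tendsto_finsetSum _ fun k _ =>
        (((AA_tendsto k).comp (tendsto_add_atTop_nat 1)).div_const _)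
    simpa using this
  have a4 := (Metric.tendsto_atTop'.1 a3) (ε / 3) (by positivity)
  obtain ⟨M, hM⟩ := a4
  refine ⟨M, fun N hN => ?_⟩
  have b1 := hM N hN
  rw [Real.dist_eq, sub_zero] at b1
  rw [Real.dist_eq, SS_expand N K]
  have b2 := SS_nonneg N K
  have b3 : SS N K ≤ 1 / ((K : ℝ) + 1) := by
    refine (SS_bound N K hK).trans ?_
    have : 0 ≤ 1 / ((N : ℝ) + 1) := by positivity
    have h2 : 0 ≤ 1 / ((K : ℝ) + 1) := by positivity
    nlinarith
  rw [abs_lt] at *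
  constructor <;> linarith [b1.1, b1.2, hK1.1, hK1.2]

theorem stmt_18 
    (a b p q : ℕ → ℝ)
    (ha0 : a 0 = 0)
    (ha : ∀ n : ℕ, 1 ≤ n → a n = 4 * (n : ℝ) ^ 2 - 3 * (n : ℝ) + 1)
    (hb0 : b 0 = 1 / 2)
    (hb : ∀ n : ℕ, 1 ≤ n → b n = -(2 * (n : ℝ) ^ 3 * (2 * (n : ℝ) + 1)))
    (hp0 : p 0 = a 0) (hq0 : q 0 = 1)
    (hp1 : p 1 = a 0 * a 1 + b 0) (hq1 : q 1 = a 1)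
    (hp : ∀ n : ℕ, p (n + 2) = a (n + 2) * p (n + 1) + b (n + 1) * p n)
    (hq : ∀ n : ℕ, q (n + 2) = a (n + 2) * q (n + 1) + b (n + 1) * q n) :
    Tendsto (fun n => p n / q n) atTop (𝓝 (Real.log 2)) := by
  have Q : ∀ n : ℕ, q n = 2 ^ n * (n.factorial : ℝ) ^ 2 ∧
      q (n + 1) = 2 ^ (n + 1) * ((n + 1).factorial : ℝ) ^ 2 := by
    intro n
    induction n with
    | zero => 
      refine ⟨by simp [hq0], ?_⟩
      rw [zero_add, hq1, ha 1 le_rfl]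
      norm_num
    | succ n ih =>
      refine ⟨ih.2, ?_⟩
      rw [hq, ih.1, ih.2, ha _ (by omega), hb _ (by omega)]
      simp only [Nat.factorial_succ]
      push_cast
      ring
  have P : ∀ n : ℕ, p n = 2 ^ n * (n.factorial : ℝ) ^ 2 * (SS n 0 / 2) ∧
      p (n + 1) = 2 ^ (n + 1) * ((n + 1).factorial : ℝ) ^ 2 * (SS (n + 1) 0 / 2) := by
    intro n
    induction n with
    | zero =>
      refine ⟨by simp [hp0, ha0, SS], ?_⟩
      rw [zero_add, hp1, ha0, hb0]
      norm_num [SS, AA]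
    | succ n ih =>
      refine ⟨ih.2, ?_⟩
      rw [hp, ih.1, ih.2, ha _ (by omega), hb _ (by omega), SS_succ (n + 1), SS_succ n,
        AA_succ (n + 1)]
      simp only [Nat.factorial_succ]
      have h1 : (n : ℝ) + 1 ≠ 0 := by positivity
      have h2 : (n : ℝ) + 1 + 1 ≠ 0 := by positivity
      push_cast
      simp only [add_zero]
      field_simp
      ring
  have h := SS_tendsto.div_const 2
  rw [mul_div_cancel_left₀ _ (two_ne_zero)] at h
  refine h.congr fun n => ?_
  rw [(P n).1, (Q n).1, mul_div_cancel_left₀]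
  positivity
end
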